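/- arXiv:1507.03099 — 2 statements merged into one kernel-verified Lean document; each statement's English description precedes it below -/
import Mathlib

section
/- For all nonnegative integers k and n, B_3(3^k·n + 3^k − 1) = 3^{2k}·B_3(n). -/
/-- The hook length of the cell `(i, j)` in a Young diagram `μ`:
arm length + leg length + 1. -/
def YoungDiagram.hookLength (μ : YoungDiagram) (i j : ℕ) : ℕ :=
  μ.rowLen i + μ.colLen j - i - j - 1

/-- A Young diagram (equivalently, a partition) is a 3-core if none of its
hook numbers is divisible by 3. -/
def YoungDiagram.IsThreeCore (μ : YoungDiagram) : Prop :=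
  ∀ c ∈ μ.cells, ¬ (3 ∣ μ.hookLength c.1 c.2)

/-- `a3 n` is the number of 3-core partitions of `n`. -/
noncomputable def a3 (n : ℕ) : ℕ :=
  Nat.card {μ : YoungDiagram // μ.card = n ∧ μ.IsThreeCore}

/-- `A3 n` is the number of partition pairs of `n` in which each partition is a 3-core. -/
noncomputable def A3 (n : ℕ) : ℕ :=
  Nat.card {p : YoungDiagram × YoungDiagram //
    p.1.card + p.2.card = n ∧ p.1.IsThreeCore ∧ p.2.IsThreeCore}

/-- `B3 n` is the number of partition triples of `n` in which each partition is a 3-core. -/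
noncomputable def B3 (n : ℕ) : ℕ :=
  Nat.card {p : YoungDiagram × YoungDiagram × YoungDiagram //
    p.1.card + p.2.1.card + p.2.2.card = n ∧
    p.1.IsThreeCore ∧ p.2.1.IsThreeCore ∧ p.2.2.IsThreeCore}

/-!
The beads of a partition are the integers `λᵢ - i - 1`, and its hook lengths are the differences of
a bead and a gap to its left. Hence a partition is a `t`-core iff on each residue class modulo `t`
the beads form a half-line, and `t`-cores correspond to integer vectors of sum zero recording the
ends of these half-lines, with the size of the partition given by a quadratic form. For `t = 3` that
form is the norm form of the Eisenstein integers: the `3`-cores of `n` correspond to the `z : ℤ[ω]`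
with `z ≡ 1` modulo `3` and norm `3 * n + 1`.

So `B3 n` counts triples of such `z` with norms adding up to `3 * (n + 1)`. The `3 × 3` Fourier
matrix over `ℤ[ω]` multiplies the sum of norms by `3` and has inverse one third of its conjugate.
Precomposed with the multiplication by the units `(-ω ^ (i + j), ω ^ i, ω ^ j)`, one of nine
possibilities, it preserves the congruence condition, and modulo `3` one sees that each triple with
norm sum `9 * (n + 1)` arises exactly once in this way. Therefore `B3 (3 * n + 2) = 9 * B3 n`.
-/

namespace CorePartition

section Integers

theorem card_Ico_neg {L : ℕ} {b : ℤ} (h : -(L : ℤ) ≤ b) :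
    ((Finset.Ico (-L : ℤ) b).card : ℤ) = b + L := by
  rw [Int.card_Ico_of_le _ _ h, sub_neg_eq_add]

theorem two_mul_sum_Ico {a b : ℤ} (hab : a ≤ b) :
    2 * ∑ m ∈ Finset.Ico a b, m = b * (b - 1) - a * (a - 1) := by
  induction b, hab using Int.leInduction with
  | base => simp
  | succ n hn ih =>
    rw [← Finset.insert_Ico_right_eq_Ico_add_one hn, Finset.sum_insert (by simp), mul_add, ih]
    ring

theorem two_mul_sum_range (K : ℕ) : 2 * ∑ i ∈ Finset.range K, (i : ℤ) = K * (K - 1) := by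
  induction K with
  | zero => simp
  | succ K ih =>
    rw [Finset.sum_range_succ, mul_add, ih]
    push_cast
    ring

theorem exists_forall_neg_le {ι : Type*} [Finite ι] (c : ι → ℤ) :
    ∃ L₀ : ℕ, ∀ L ≥ L₀, ∀ r, -(L : ℤ) ≤ c r := by
  obtain ⟨b, hb⟩ := (Set.finite_range c).bddBelow
  refine ⟨(-b).toNat, fun L hL r ↦ ?_⟩
  have := hb (Set.mem_range_self r)
  omega

theorem exists_eq_Iio_of_sub_one_mem {A : Set ℤ} (hsub : ∀ m ∈ A, m - 1 ∈ A)
    (hne : A.Nonempty) (hbdd : BddAbove A) : ∃ b, A = Set.Iio b := by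
  refine ⟨sSup A + 1, Set.ext fun m ↦ ?_⟩
  rw [Set.mem_Iio, Int.lt_add_one_iff]
  exact ⟨le_csSup hbdd, Int.leInductionDown (motive := fun m _ ↦ m ∈ A)
    (Int.csSup_mem hne hbdd) (fun k _ hk ↦ hsub k hk) m⟩

end Integers

section BetaSet

variable {μ : YoungDiagram}

theorem lt_rowLen_iff_lt_colLen {i j : ℕ} : j < μ.rowLen i ↔ i < μ.colLen j := by
  rw [← YoungDiagram.mem_iff_lt_rowLen, ← YoungDiagram.mem_iff_lt_colLen]

theorem rowLen_eq_zero_iff {i : ℕ} : μ.rowLen i = 0 ↔ μ.colLen 0 ≤ i := by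
  rw [← not_lt, ← lt_rowLen_iff_lt_colLen, Nat.pos_iff_ne_zero, not_not]

theorem rowLen_injective : Function.Injective YoungDiagram.rowLen := fun μ ν h ↦
  SetLike.ext fun ⟨i, j⟩ ↦ by
    rw [YoungDiagram.mem_iff_lt_rowLen, YoungDiagram.mem_iff_lt_rowLen, h]

theorem exists_rowLen_eq {f : ℕ → ℕ} {K : ℕ} (hf : Antitone f) (hK : ∀ i, K ≤ i → f i = 0) :
    ∃ μ : YoungDiagram, μ.rowLen = f := by
  have hsorted : ((List.range K).map f).SortedGE :=
    List.Pairwise.sortedGE (List.pairwise_le_range.map f fun _ _ hij ↦ hf hij)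
  refine ⟨.ofRowLens _ hsorted, funext fun i ↦ eq_of_forall_lt_iff fun j ↦ ?_⟩
  rw [← YoungDiagram.mem_iff_lt_rowLen, YoungDiagram.mem_ofRowLens]
  have hlt : j < f i → i < K := fun hj ↦ by
    by_contra! hKi
    simp [hK i hKi] at hj
  simpa using hlt

theorem card_eq_sum_rowLen {K : ℕ} (hK : μ.colLen 0 ≤ K) :
    μ.card = ∑ i ∈ Finset.range K, μ.rowLen i := by
  have hmaps : ∀ c ∈ μ.cells, c.1 ∈ Finset.range K := fun c hc ↦ by
    have hc' := YoungDiagram.mem_iff_lt_colLen.1 (μ.up_left_mem le_rfl (Nat.zero_le c.2) hc)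
    exact Finset.mem_range.2 (hc'.trans_le hK)
  rw [YoungDiagram.card, Finset.card_eq_sum_card_fiberwise hmaps]
  exact Finset.sum_congr rfl fun i _ ↦ (μ.rowLen_eq_card).symm

/-- The position `λᵢ - i - 1` of the bead attached to the `i`-th row (counted from `0`). The rows
past the last nonempty one contribute beads as well; those fill all positions far to the left. -/
def bead (μ : YoungDiagram) (i : ℕ) : ℤ := μ.rowLen i - i - 1

/-- The position of the gap attached to the `j`-th column. It plays the role of a bead for the
transposed diagram, with the line reversed. -/
def gap (μ : YoungDiagram) (j : ℕ) : ℤ := j - μ.colLen j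

/-- The beta-set (Maya diagram) of a Young diagram: the set of all its bead positions. -/
def betaSet (μ : YoungDiagram) : Set ℤ := Set.range (bead μ)

theorem bead_strictAnti (μ : YoungDiagram) : StrictAnti (bead μ) :=
  strictAnti_nat_of_succ_lt fun i ↦ by
    have := μ.rowLen_anti i (i + 1) i.le_succ
    simp only [bead]
    omega

theorem betaSet_injective : Function.Injective betaSet := fun μ ν h ↦ by
  have hbead : bead μ = bead ν :=
    ((bead_strictAnti μ).dual_right.range_inj (bead_strictAnti ν).dual_right).1 h
  refine rowLen_injective (funext fun i ↦ ?_)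
  have := congrFun hbead i
  simp only [bead] at this
  omega

theorem gap_lt_bead_iff {i j : ℕ} : gap μ j < bead μ i ↔ j < μ.rowLen i := by
  have := lt_rowLen_iff_lt_colLen (μ := μ) (i := i) (j := j)
  simp only [gap, bead]
  omega

theorem gap_ne_bead (i j : ℕ) : gap μ j ≠ bead μ i := by
  have := lt_rowLen_iff_lt_colLen (μ := μ) (i := i) (j := j)
  simp only [gap, bead]
  omega

theorem exists_gap_of_notMem_betaSet {x : ℤ} (hx : x ∉ betaSet μ) : ∃ j, gap μ j = x := by
  have hle : ∃ i, bead μ i ≤ x := by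
    refine ⟨(μ.rowLen 0 - x).toNat, ?_⟩
    have := μ.rowLen_anti 0 (μ.rowLen 0 - x).toNat (Nat.zero_le _)
    simp only [bead]
    omega
  classical
  obtain ⟨i, hi, hmin⟩ : ∃ i, bead μ i ≤ x ∧ ∀ k < i, x < bead μ k :=
    ⟨Nat.find hle, Nat.find_spec hle, fun k hk ↦ not_le.1 (Nat.find_min hle hk)⟩
  replace hi : bead μ i < x := hi.lt_of_ne fun h ↦ hx ⟨i, h⟩
  simp only [bead] at hi hmin
  -- The rows whose bead lies to the right of `x` are exactly those meeting column `x + i`.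
  have hcol : μ.colLen (x + i).toNat = i := by
    refine eq_of_forall_lt_iff fun k ↦ ?_
    rw [← lt_rowLen_iff_lt_colLen]
    refine ⟨fun h ↦ ?_, fun h ↦ ?_⟩
    · by_contra! hik
      have := μ.rowLen_anti i k hik
      omega
    · have := hmin (i - 1) (by omega)
      have := μ.rowLen_anti k (i - 1) (by omega)
      omega
  exact ⟨(x + i).toNat, by simp only [gap, hcol]; omega⟩

theorem hookLength_eq_bead_sub_gap {i j : ℕ} (h : j < μ.rowLen i) :
    (μ.hookLength i j : ℤ) = bead μ i - gap μ j := by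
  have := lt_rowLen_iff_lt_colLen.1 h
  simp only [YoungDiagram.hookLength, bead, gap]
  omega

theorem mem_betaSet_of_lt {x : ℤ} (hx : x < -μ.colLen 0) : x ∈ betaSet μ := by
  refine ⟨(-x - 1).toNat, ?_⟩
  have := (rowLen_eq_zero_iff (μ := μ) (i := (-x - 1).toNat)).2 (by omega)
  simp only [bead, this]
  omega

theorem lt_rowLen_zero_of_mem_betaSet {x : ℤ} (hx : x ∈ betaSet μ) : x < μ.rowLen 0 := by
  obtain ⟨i, rfl⟩ := hx
  have := μ.rowLen_anti 0 i i.zero_le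
  simp only [bead]
  omega

theorem neg_le_bead_iff {K i : ℕ} (hK : μ.colLen 0 ≤ K) : -(K : ℤ) ≤ bead μ i ↔ i < K := by
  have hzero := rowLen_eq_zero_iff (μ := μ) (i := i)
  simp only [bead]
  omega

theorem exists_bead_eq {f : ℕ → ℤ} {K : ℕ} (hf : StrictAnti f)
    (hK : ∀ i : ℕ, K ≤ i → f i = -i - 1) : ∃ μ, bead μ = f := by
  have hanti : Antitone fun i : ℕ ↦ f i + i + 1 := antitone_nat_of_succ_le fun i ↦ by
    have := hf (Nat.lt_add_one i)
    push_cast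
    omega
  have hnonneg (i : ℕ) : 0 ≤ f i + i + 1 := by
    have hmax : f (max i K) + (max i K : ℕ) + 1 ≤ f i + i + 1 := hanti (le_max_left i K)
    rw [hK _ (le_max_right i K)] at hmax
    omega
  obtain ⟨μ, hμ⟩ := exists_rowLen_eq (f := fun i ↦ (f i + i + 1).toNat) (K := K)
    (fun i j hij ↦ Int.toNat_le_toNat (hanti hij)) (fun i hi ↦ by simp only [hK i hi]; omega)
  refine ⟨μ, funext fun i ↦ ?_⟩
  have := hnonneg i
  simp only [bead, hμ]
  omega

theorem exists_betaSet_eq {X : Set ℤ} {S : Finset ℤ} {K : ℕ}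
    (hS : ∀ x, x ∈ S ↔ x ∈ X ∧ -(K : ℤ) ≤ x) (hcard : S.card = K)
    (hX : ∀ x < -(K : ℤ), x ∈ X) : ∃ μ, betaSet μ = X := by
  let e := S.orderEmbOfFin hcard
  have he (i : Fin K) : e i ∈ X ∧ -(K : ℤ) ≤ e i := (hS _).1 (S.orderEmbOfFin_mem hcard i)
  let f (i : ℕ) : ℤ := if h : i < K then e (Fin.rev ⟨i, h⟩) else -i - 1
  have hf : StrictAnti f := fun i j hij ↦ by
    by_cases hj : j < K
    · simpa [f, hj, hij.trans hj] using hij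
    · by_cases hi : i < K
      · have := (he (Fin.rev ⟨i, hi⟩)).2
        simp only [f, hi, hj, dite_true, dite_false]
        omega
      · simp only [f, hi, hj, dite_false]
        omega
  obtain ⟨μ, hμ⟩ := exists_bead_eq hf fun i hi ↦ dif_neg hi.not_gt
  refine ⟨μ, ?_⟩
  rw [betaSet, hμ]
  ext x
  constructor
  · rintro ⟨i, rfl⟩
    by_cases hi : i < K
    · simpa [f, hi] using (he _).1
    · simpa [f, hi] using hX _ (by omega)
  · intro hx
    rcases lt_or_ge x (-K) with hlt | hge
    · have hi : ¬ (-x - 1).toNat < K := by omega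
      exact ⟨(-x - 1).toNat, by simp only [f, hi, dite_false]; omega⟩
    · obtain ⟨i, hi⟩ : x ∈ Set.range e := by simpa [e] using (hS x).2 ⟨hx, hge⟩
      exact ⟨i.rev, by simp only [f, i.rev.isLt, dite_true, Fin.eta, Fin.rev_rev, hi]⟩

end BetaSet

section Core

variable {t : ℕ} {μ : YoungDiagram}

/-- A Young diagram is a `t`-core if none of its hook lengths is divisible by `t`. -/
def IsCore (t : ℕ) (μ : YoungDiagram) : Prop :=
  ∀ c ∈ μ.cells, ¬ t ∣ μ.hookLength c.1 c.2

theorem isCore_iff_sub_mem_betaSet :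
    IsCore t μ ↔ ∀ x ∈ betaSet μ, x - t ∈ betaSet μ := by
  constructor
  · rintro hcore x ⟨i, rfl⟩
    by_contra hmem
    obtain ⟨j, hj⟩ := exists_gap_of_notMem_betaSet hmem
    have hcell : j < μ.rowLen i := gap_lt_bead_iff.1 <| (gap_ne_bead i j).lt_of_le (by omega)
    refine hcore (i, j) (YoungDiagram.mem_iff_lt_rowLen.2 hcell) ?_
    rw [← Int.natCast_dvd_natCast, hookLength_eq_bead_sub_gap hcell, hj, sub_sub_cancel]
  · rintro hclosed ⟨i, j⟩ hc ⟨k, hk⟩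
    have hsub (n : ℕ) : bead μ i - t * n ∈ betaSet μ := by
      induction n with
      | zero => simp [betaSet]
      | succ n ih => simpa [mul_add, sub_sub] using hclosed _ ih
    obtain ⟨i', hi'⟩ := hsub k
    have hhook := hookLength_eq_bead_sub_gap (YoungDiagram.mem_iff_lt_rowLen.1 hc)
    refine gap_ne_bead (μ := μ) i' j ?_
    push_cast [hk] at hhook
    omega

/-- The `t`-runner abacus with charges `c`: position `m * t + r` on runner `r` carries a bead
precisely when `m < c r`. -/
def abacus [NeZero t] (c : Fin t → ℤ) : Set ℤ :=
  {x | (Int.divModEquiv t x).1 < c (Int.divModEquiv t x).2}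

variable [NeZero t] {c : Fin t → ℤ}

theorem mul_add_mem_abacus {m : ℤ} {r : Fin t} : m * t + r ∈ abacus c ↔ m < c r := by
  rw [← Int.divModEquiv_symm_apply t (m, r), abacus, Set.mem_ofPred_eq, Equiv.apply_symm_apply]

theorem exists_mul_add_eq (t : ℕ) [NeZero t] (x : ℤ) : ∃ (m : ℤ) (r : Fin t), m * t + r = x :=
  ⟨_, _, (Int.divModEquiv t).symm_apply_apply x⟩

theorem abacus_injective : Function.Injective (abacus (t := t)) := fun c d h ↦
  funext fun r ↦ eq_of_forall_lt_iff fun m ↦ by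
    rw [← mul_add_mem_abacus, ← mul_add_mem_abacus, h]

theorem sub_mem_abacus {x : ℤ} (hx : x ∈ abacus c) : x - t ∈ abacus c := by
  obtain ⟨m, r, rfl⟩ := exists_mul_add_eq t x
  rw [mul_add_mem_abacus] at hx
  rw [show m * t + r - t = (m - 1) * t + r by ring, mul_add_mem_abacus]
  omega

theorem exists_betaSet_eq_abacus (hμ : IsCore t μ) : ∃ c : Fin t → ℤ, betaSet μ = abacus c := by
  have ht : 0 < (t : ℤ) := by exact_mod_cast NeZero.pos t
  have hrunner (r : Fin t) : ∃ b, {m : ℤ | m * t + r ∈ betaSet μ} = Set.Iio b := by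
    refine exists_eq_Iio_of_sub_one_mem (fun m hm ↦ ?_) ⟨-μ.colLen 0 - 1, ?_⟩ ⟨μ.rowLen 0, ?_⟩
    · have := isCore_iff_sub_mem_betaSet.1 hμ _ hm
      rwa [show m * t + r - t = (m - 1) * t + r by ring] at this
    · have := r.isLt
      exact mem_betaSet_of_lt (by nlinarith)
    · intro m hm
      have := lt_rowLen_zero_of_mem_betaSet hm
      nlinarith
  choose c hc using hrunner
  refine ⟨c, Set.ext fun x ↦ ?_⟩
  obtain ⟨m, r, rfl⟩ := exists_mul_add_eq t x
  rw [mul_add_mem_abacus, ← Set.mem_Iio, ← hc, Set.mem_ofPred_eq]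

/-- The beads of `abacus c` at positions `-L * t` and above. -/
noncomputable def abacusWindow (c : Fin t → ℤ) (L : ℕ) : Finset ℤ :=
  (Finset.univ.sigma fun r ↦ Finset.Ico (-L : ℤ) (c r)).map
    (((Equiv.sigmaEquivProd (Fin t) ℤ).trans (Equiv.prodComm _ _)).trans
      (Int.divModEquiv t).symm).toEmbedding

theorem sum_abacusWindow {M : Type*} [AddCommMonoid M] (c : Fin t → ℤ) (L : ℕ) (f : ℤ → M) :
    ∑ x ∈ abacusWindow c L, f x = ∑ r, ∑ m ∈ Finset.Ico (-L : ℤ) (c r), f (m * t + r) := by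
  simp [abacusWindow, Finset.sum_sigma]

theorem mem_abacusWindow {L : ℕ} {x : ℤ} :
    x ∈ abacusWindow c L ↔ x ∈ abacus c ∧ -(L * t : ℕ) ≤ x := by
  obtain ⟨m, r, rfl⟩ := exists_mul_add_eq t x
  have hmem : m * t + r ∈ abacusWindow c L ↔ m ∈ Finset.Ico (-L : ℤ) (c r) := by
    rw [← Int.divModEquiv_symm_apply t (m, r)]
    simp [abacusWindow, -Int.divModEquiv_symm_apply]
  have hle : -((L * t : ℕ) : ℤ) ≤ m * t + r ↔ -(L : ℤ) ≤ m := by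
    have := r.isLt
    push_cast
    constructor <;> intro h <;> nlinarith
  rw [hmem, mul_add_mem_abacus, hle, Finset.mem_Ico, and_comm]

theorem card_abacusWindow {L : ℕ} (hL : ∀ r, -(L : ℤ) ≤ c r) :
    ((abacusWindow c L).card : ℤ) = ∑ r, c r + (L * t : ℕ) := by
  calc ((abacusWindow c L).card : ℤ)
    _ = ∑ r, ((Finset.Ico (-L : ℤ) (c r)).card : ℤ) := by
      rw [abacusWindow, Finset.card_map, Finset.card_sigma, Nat.cast_sum]
    _ = ∑ r, (c r + L) := Finset.sum_congr rfl fun r _ ↦ card_Ico_neg (hL r)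
    _ = ∑ r, c r + (L * t : ℕ) := by simp [Finset.sum_add_distrib, mul_comm]

theorem exists_betaSet_eq_abacus_of_sum_eq_zero (hc : ∑ r, c r = 0) :
    ∃ μ, betaSet μ = abacus c := by
  obtain ⟨L, hL⟩ := exists_forall_neg_le c
  have hcard : (abacusWindow c L).card = L * t := by
    have := card_abacusWindow (hL L le_rfl)
    rw [hc] at this
    omega
  refine exists_betaSet_eq (fun x ↦ mem_abacusWindow) hcard fun x hx ↦ ?_
  obtain ⟨m, r, rfl⟩ := exists_mul_add_eq t x
  refine mul_add_mem_abacus.2 (lt_of_lt_of_le ?_ (hL L le_rfl r))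
  push_cast at hx
  nlinarith

theorem map_bead_range_eq_abacusWindow {L : ℕ} (hμ : betaSet μ = abacus c)
    (hL : μ.colLen 0 ≤ L * t) :
    (Finset.range (L * t)).map ⟨bead μ, (bead_strictAnti μ).injective⟩ = abacusWindow c L := by
  ext x
  rw [mem_abacusWindow, ← hμ]
  simp only [Finset.mem_map, Finset.mem_range, Function.Embedding.coeFn_mk]
  constructor
  · rintro ⟨i, hi, rfl⟩
    exact ⟨⟨i, rfl⟩, (neg_le_bead_iff hL).2 hi⟩
  · rintro ⟨⟨i, rfl⟩, hi⟩
    exact ⟨i, (neg_le_bead_iff hL).1 hi, rfl⟩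

theorem exists_window (μ : YoungDiagram) (c : Fin t → ℤ) :
    ∃ L : ℕ, μ.colLen 0 ≤ L * t ∧ ∀ r, -(L : ℤ) ≤ c r := by
  obtain ⟨L₀, hL₀⟩ := exists_forall_neg_le c
  refine ⟨max L₀ (μ.colLen 0), ?_, hL₀ _ (le_max_left _ _)⟩
  exact (le_max_right _ _).trans (Nat.le_mul_of_pos_right _ (NeZero.pos t))

theorem sum_charge_eq_zero (hμ : betaSet μ = abacus c) : ∑ r, c r = 0 := by
  obtain ⟨L, hrows, hL⟩ := exists_window μ c
  have hcard := card_abacusWindow hL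
  rw [← map_bead_range_eq_abacusWindow hμ hrows, Finset.card_map, Finset.card_range] at hcard
  omega

theorem two_mul_sum_bead {K : ℕ} (hK : μ.colLen 0 ≤ K) :
    2 * ∑ i ∈ Finset.range K, bead μ i = 2 * μ.card - K * (K + 1) := by
  simp only [bead, card_eq_sum_rowLen hK, Nat.cast_sum, Finset.sum_sub_distrib, Finset.sum_const,
    Finset.card_range, nsmul_eq_mul]
  linear_combination -two_mul_sum_range K

theorem two_mul_sum_abacusWindow {L : ℕ} (hL : ∀ r, -(L : ℤ) ≤ c r) (hc : ∑ r, c r = 0) :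
    2 * ∑ x ∈ abacusWindow c L, x =
      ∑ r, (t * c r ^ 2 + 2 * r * c r) - (L * t : ℕ) * ((L * t : ℕ) + 1) := by
  have hrunner (r : Fin t) : 2 * ∑ m ∈ Finset.Ico (-L : ℤ) (c r), (m * t + r) =
      (t * c r ^ 2 + 2 * r * c r) - t * c r + 2 * L * r - t * L * (L + 1) := by
    rw [Finset.sum_add_distrib, ← Finset.sum_mul, Finset.sum_const, nsmul_eq_mul,
      card_Ico_neg (hL r)]
    linear_combination (t : ℤ) * two_mul_sum_Ico (hL r)
  have hres : 2 * ∑ r : Fin t, (r : ℤ) = t * (t - 1) := by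
    rw [Fin.sum_univ_eq_sum_range (fun i ↦ (i : ℤ)) t, two_mul_sum_range]
  rw [sum_abacusWindow, Finset.mul_sum, Finset.sum_congr rfl fun r _ ↦ hrunner r]
  simp only [Finset.sum_sub_distrib, Finset.sum_add_distrib, ← Finset.mul_sum, hc, mul_zero,
    sub_zero, Finset.sum_const, Finset.card_univ, Fintype.card_fin, nsmul_eq_mul, Nat.cast_mul]
  linear_combination (L : ℤ) * hres

theorem two_mul_card_eq_sum_charge (hμ : betaSet μ = abacus c) :
    2 * (μ.card : ℤ) = ∑ r, (t * c r ^ 2 + 2 * r * c r) := by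
  obtain ⟨L, hrows, hL⟩ := exists_window μ c
  have hwindow := two_mul_sum_abacusWindow hL (sum_charge_eq_zero hμ)
  rw [← map_bead_range_eq_abacusWindow hμ hrows, Finset.sum_map] at hwindow
  exact sub_left_injective ((two_mul_sum_bead hrows).symm.trans hwindow)

theorem isCore_of_betaSet_eq_abacus (hμ : betaSet μ = abacus c) : IsCore t μ :=
  isCore_iff_sub_mem_betaSet.2 (hμ ▸ fun _ ↦ sub_mem_abacus)

/-- The charge vector of a `t`-core: its `r`-th entry `m` marks the first gap `m * t + r` on
runner `r` of the abacus. -/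
noncomputable def IsCore.charge (hμ : IsCore t μ) : Fin t → ℤ :=
  (exists_betaSet_eq_abacus hμ).choose

theorem IsCore.betaSet_eq_abacus_charge (hμ : IsCore t μ) : betaSet μ = abacus hμ.charge :=
  (exists_betaSet_eq_abacus hμ).choose_spec

/-- The Garvan–Kim–Stanton bijection between `t`-cores and charge vectors of sum zero. -/
noncomputable def coreEquivCharge (t : ℕ) [NeZero t] :
    {μ : YoungDiagram // IsCore t μ} ≃ {c : Fin t → ℤ // ∑ r, c r = 0} :=
  Equiv.ofBijective (fun μ ↦ ⟨μ.2.charge, sum_charge_eq_zero μ.2.betaSet_eq_abacus_charge⟩) <| by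
    refine ⟨fun μ ν h ↦ Subtype.ext <| betaSet_injective ?_, fun ⟨c, hc⟩ ↦ ?_⟩
    · rw [μ.2.betaSet_eq_abacus_charge, ν.2.betaSet_eq_abacus_charge]
      exact congrArg (abacus ·.1) h
    · obtain ⟨μ, hμ⟩ := exists_betaSet_eq_abacus_of_sum_eq_zero hc
      have hcore := isCore_of_betaSet_eq_abacus hμ
      exact ⟨⟨μ, hcore⟩, Subtype.ext <| abacus_injective <|
        hcore.betaSet_eq_abacus_charge.symm.trans hμ⟩

theorem two_mul_card_eq_sum_coreEquivCharge (μ : {μ : YoungDiagram // IsCore t μ}) :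
    2 * (μ.1.card : ℤ) =
      ∑ r, (t * (coreEquivCharge t μ).1 r ^ 2 + 2 * r * (coreEquivCharge t μ).1 r) :=
  two_mul_card_eq_sum_charge μ.2.betaSet_eq_abacus_charge

end Core

section Fourier

variable {R : Type*} [CommRing R] {ζ : R}

/-- The unnormalised Fourier transform on triples with respect to a cube root of unity `ζ`. -/
def fourier (ζ : R) (v : R × R × R) : R × R × R :=
  (v.1 + v.2.1 + v.2.2, v.1 + ζ * v.2.1 + ζ ^ 2 * v.2.2, v.1 + ζ ^ 2 * v.2.1 + ζ * v.2.2)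

theorem fourier_add (ζ : R) (v w : R × R × R) :
    fourier ζ (v + w) = fourier ζ v + fourier ζ w := by
  ext <;> simp only [fourier, Prod.fst_add, Prod.snd_add] <;> ring

theorem fourier_one_zero_zero (ζ : R) : fourier ζ (1, 0, 0) = (1, 1, 1) := by
  simp [fourier]

theorem pow_three_eq_one_of_one_add_add_sq_eq_zero (hζ : 1 + ζ + ζ ^ 2 = 0) : ζ ^ 3 = 1 := by
  linear_combination (ζ - 1) * hζ

theorem fourier_fourier_sq (hζ : 1 + ζ + ζ ^ 2 = 0) (v : R × R × R) :
    fourier ζ (fourier (ζ ^ 2) v) = (3 : R) • v := by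
  have hcube := pow_three_eq_one_of_one_add_add_sq_eq_zero hζ
  ext <;> simp only [fourier, Prod.smul_fst, Prod.smul_snd, smul_eq_mul]
  · linear_combination (v.2.1 + v.2.2) * (1 - ζ + ζ ^ 2) * hζ
  · linear_combination (v.1 + v.2.2) * hζ +
      (v.2.1 * (ζ ^ 3 + 2) + v.2.2 * (ζ + ζ ^ 2)) * hcube
  · linear_combination (v.1 + v.2.1) * hζ +
      (v.2.2 * (ζ ^ 3 + 2) + v.2.1 * (ζ + ζ ^ 2)) * hcube

theorem fourier_sq_fourier (hζ : 1 + ζ + ζ ^ 2 = 0) (v : R × R × R) :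
    fourier (ζ ^ 2) (fourier ζ v) = (3 : R) • v := by
  have hcube := pow_three_eq_one_of_one_add_add_sq_eq_zero hζ
  ext <;> simp only [fourier, Prod.smul_fst, Prod.smul_snd, smul_eq_mul]
  · linear_combination (v.2.1 + v.2.2) * hζ
  · linear_combination (v.1 * (1 - ζ + ζ ^ 2) + v.2.2) * hζ +
      (v.2.1 * (ζ ^ 3 + 2) + v.2.2 * (ζ + ζ ^ 2)) * hcube
  · linear_combination (v.1 * (1 - ζ + ζ ^ 2) + v.2.1) * hζ +
      (v.2.2 * (ζ ^ 3 + 2) + v.2.1 * (ζ + ζ ^ 2)) * hcube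

end Fourier

section Eisenstein

open QuadraticAlgebra (norm)
open scoped QuadraticAlgebra

/-- The ring `ℤ[ω]` of Eisenstein integers, presented by `ω² = -1 - ω`. -/
abbrev Eisenstein : Type := QuadraticAlgebra ℤ (-1) (-1)

/-- An Eisenstein integer is primary if it is congruent to `1` modulo `3`. -/
def IsPrimary (z : Eisenstein) : Prop := 3 ∣ z - 1

variable {x y z u : Eisenstein}

theorem norm_eq (z : Eisenstein) : norm z = z.re ^ 2 - z.re * z.im + z.im ^ 2 := by
  rw [QuadraticAlgebra.norm_def]
  ring

theorem three_dvd_iff : 3 ∣ z ↔ 3 ∣ z.re ∧ 3 ∣ z.im :=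
  QuadraticAlgebra.algebraMap_dvd_iff (r := 3)

theorem isPrimary_iff : IsPrimary z ↔ 3 ∣ z.re - 1 ∧ 3 ∣ z.im := by
  simp [IsPrimary, three_dvd_iff]

theorem one_add_omega_add_omega_sq : (1 + ω + ω ^ 2 : Eisenstein) = 0 := by
  ext <;> simp [sq]

theorem omega_pow_three : (ω : Eisenstein) ^ 3 = 1 :=
  pow_three_eq_one_of_one_add_add_sq_eq_zero one_add_omega_add_omega_sq

theorem isUnit_omega : IsUnit (ω : Eisenstein) :=
  .of_pow_eq_one omega_pow_three three_ne_zero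

theorem three_dvd_one_sub_omega_pow_mul (i j : ℕ) :
    (3 : Eisenstein) ∣ (1 - ω ^ i) * (1 - ω ^ j) := by
  have hsq : (3 : Eisenstein) ∣ (1 - ω) * (1 - ω) :=
    ⟨-ω, by linear_combination one_add_omega_add_omega_sq⟩
  exact hsq.trans (mul_dvd_mul (one_sub_dvd_one_sub_pow _ i) (one_sub_dvd_one_sub_pow _ j))

theorem IsPrimary.neg_omega_pow_mul_add (hx : IsPrimary x) (hy : IsPrimary y) (hz : IsPrimary z)
    (i j : ℕ) : IsPrimary (-ω ^ (i + j) * x + ω ^ i * y + ω ^ j * z) := by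
  have hsplit : -ω ^ (i + j) * x + ω ^ i * y + ω ^ j * z - 1 =
      -ω ^ (i + j) * (x - 1) + ω ^ i * (y - 1) + ω ^ j * (z - 1) -
        (1 - ω ^ i) * (1 - ω ^ j) := by ring
  rw [IsPrimary, hsplit]
  exact dvd_sub (dvd_add (dvd_add (hx.mul_left _) (hy.mul_left _)) (hz.mul_left _))
    (three_dvd_one_sub_omega_pow_mul i j)

theorem exists_isPrimary_eq_mul (hu : IsUnit u) (h : 3 ∣ z - u) :
    ∃ v, IsPrimary v ∧ z = u * v := by
  obtain ⟨u, rfl⟩ := hu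
  refine ⟨↑u⁻¹ * z, ?_, by simp⟩
  simpa [IsPrimary, mul_sub] using h.mul_left (↑u⁻¹ : Eisenstein)

theorem eq_of_three_dvd_omega_pow_sub {i j : Fin 3}
    (h : (3 : Eisenstein) ∣ ω ^ (i : ℕ) - ω ^ (j : ℕ)) : i = j := by
  rw [three_dvd_iff] at h
  revert i j
  decide

theorem IsPrimary.eq_and_eq_of_omega_pow_mul_eq (hx : IsPrimary x) (hy : IsPrimary y) {i j : Fin 3}
    (h : ω ^ (i : ℕ) * x = ω ^ (j : ℕ) * y) : i = j ∧ x = y := by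
  have hij : i = j := eq_of_three_dvd_omega_pow_sub <| by
    have := dvd_sub (hy.mul_left (ω ^ (j : ℕ))) (hx.mul_left (ω ^ (i : ℕ)))
    convert this using 1
    linear_combination h
  subst hij
  exact ⟨rfl, (isUnit_omega.pow _).mul_left_cancel h⟩

/-- Reduction modulo the prime `1 - ω` above `3`. -/
def residue : Eisenstein →ₐ[ℤ] ZMod 3 :=
  QuadraticAlgebra.lift ⟨1, by decide⟩

theorem residue_apply (z : Eisenstein) : residue z = z.re + z.im := by
  simp [residue, QuadraticAlgebra.lift]

theorem residue_omega : residue ω = 1 := by simp [residue_apply]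

theorem residue_eq_zero_of_three_dvd (h : 3 ∣ z) : residue z = 0 := by
  obtain ⟨w, rfl⟩ := h
  rw [map_mul, show residue 3 = 0 from rfl, zero_mul]

theorem residue_sq (z : Eisenstein) : residue z ^ 2 = (norm z : ℤ) := by
  have hthree : (3 : ZMod 3) = 0 := rfl
  rw [norm_eq, residue_apply]
  push_cast
  linear_combination (z.re * z.im : ZMod 3) * hthree

theorem residue_eq_zero_of_three_dvd_omega_sub_one_mul (h : 3 ∣ (ω - 1) * z) :
    residue z = 0 := by
  have := (three_dvd_iff.1 h).1
  rw [residue_apply, ← Int.cast_add, ZMod.intCast_zmod_eq_zero_iff_dvd]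
  simp only [QuadraticAlgebra.re_mul, QuadraticAlgebra.re_sub, QuadraticAlgebra.im_sub,
    QuadraticAlgebra.omega_re, QuadraticAlgebra.omega_im, QuadraticAlgebra.re_one,
    QuadraticAlgebra.im_one] at this
  omega

theorem exists_three_dvd_sub_omega_pow (h : residue z = 1) :
    ∃ i : Fin 3, 3 ∣ z - ω ^ (i : ℕ) := by
  have hsum : 3 ∣ z.re + z.im - 1 := by
    refine (ZMod.intCast_zmod_eq_zero_iff_dvd _ 3).1 ?_
    push_cast
    rw [← residue_apply, h, sub_self]
  obtain ⟨hre, him⟩ | ⟨hre, him⟩ | ⟨hre, him⟩ :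
      (3 ∣ z.re - 1 ∧ 3 ∣ z.im) ∨ (3 ∣ z.re ∧ 3 ∣ z.im - 1) ∨ (3 ∣ z.re + 1 ∧ 3 ∣ z.im + 1) := by
    omega
  · exact ⟨0, three_dvd_iff.2 (by simpa using ⟨hre, him⟩)⟩
  · exact ⟨1, three_dvd_iff.2 (by simpa using ⟨hre, him⟩)⟩
  · exact ⟨2, three_dvd_iff.2 (by simpa [sq] using ⟨hre, him⟩)⟩

variable {v : Eisenstein × Eisenstein × Eisenstein}

/-- The norm form on triples of Eisenstein integers. -/
def normSum (v : Eisenstein × Eisenstein × Eisenstein) : ℤ :=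
  norm v.1 + norm v.2.1 + norm v.2.2

/-- A triple of Eisenstein integers is primary if its three entries are. -/
def IsPrimaryTriple (v : Eisenstein × Eisenstein × Eisenstein) : Prop :=
  IsPrimary v.1 ∧ IsPrimary v.2.1 ∧ IsPrimary v.2.2

/-- The type of primary triples whose norms add up to `m`. -/
abbrev PrimaryTriple (m : ℤ) : Type :=
  {v : Eisenstein × Eisenstein × Eisenstein // IsPrimaryTriple v ∧ normSum v = m}

/-- Multiplication of a triple by the units `-ω ^ (i + j)`, `ω ^ i` and `ω ^ j`. These are
exactly the unit twists after which `fourier ω` takes primary triples to primary triples. -/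
def twist (i j : ℕ) (v : Eisenstein × Eisenstein × Eisenstein) :
    Eisenstein × Eisenstein × Eisenstein :=
  (-ω ^ (i + j) * v.1, ω ^ i * v.2.1, ω ^ j * v.2.2)

theorem normSum_twist (i j : ℕ) (v : Eisenstein × Eisenstein × Eisenstein) :
    normSum (twist i j v) = normSum v := by
  have hω : norm (ω : Eisenstein) = 1 := by simp [norm_eq]
  simp [normSum, twist, hω]

theorem normSum_fourier_omega (v : Eisenstein × Eisenstein × Eisenstein) :
    normSum (fourier ω v) = 3 * normSum v := by
  simp only [normSum, fourier, norm_eq, sq, QuadraticAlgebra.re_add, QuadraticAlgebra.im_add,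
    QuadraticAlgebra.re_mul, QuadraticAlgebra.im_mul, QuadraticAlgebra.omega_re,
    QuadraticAlgebra.omega_im]
  ring

theorem IsPrimaryTriple.fourier_omega_twist (hv : IsPrimaryTriple v) (i j : ℕ) :
    IsPrimaryTriple (fourier ω (twist i j v)) := by
  obtain ⟨hx, hy, hz⟩ := hv
  refine ⟨hx.neg_omega_pow_mul_add hy hz i j, ?_, ?_⟩
  · convert hx.neg_omega_pow_mul_add hy hz (i + 1) (j + 2) using 1
    simp only [fourier, twist]
    linear_combination ω ^ (i + j) * v.1 * omega_pow_three
  · convert hx.neg_omega_pow_mul_add hy hz (i + 2) (j + 1) using 1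
    simp only [fourier, twist]
    linear_combination ω ^ (i + j) * v.1 * omega_pow_three

/-- The map inducing a bijection between nine copies of the primary triples of norm `3 * m` and
the primary triples of norm `9 * m`. -/
def fourierTwist {m : ℤ} (p : (Fin 3 × Fin 3) × PrimaryTriple (3 * m)) : PrimaryTriple (9 * m) :=
  ⟨fourier ω (twist p.1.1 p.1.2 p.2), p.2.2.1.fourier_omega_twist _ _, by
    rw [normSum_fourier_omega, normSum_twist, p.2.2.2]
    ring⟩

theorem three_smul_injective :
    Function.Injective fun v : Eisenstein × Eisenstein × Eisenstein ↦ (3 : Eisenstein) • v :=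
  fun v w h ↦ by simpa [Prod.ext_iff, QuadraticAlgebra.ext_iff] using h

theorem fourier_omega_injective : Function.Injective (fourier (ω : Eisenstein)) := fun v w h ↦ by
  have := congrArg (fourier (ω ^ 2)) h
  rw [fourier_sq_fourier one_add_omega_add_omega_sq,
    fourier_sq_fourier one_add_omega_add_omega_sq] at this
  exact three_smul_injective this

theorem fourierTwist_injective (m : ℤ) : Function.Injective (fourierTwist (m := m)) := by
  rintro ⟨⟨i, j⟩, v, ⟨hx, hy, hz⟩, _⟩ ⟨⟨i', j'⟩, v', ⟨hx', hy', hz'⟩, _⟩ h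
  obtain ⟨hfst, hsnd, hthd⟩ : -ω ^ (i + j : ℕ) * v.1 = -ω ^ (i' + j' : ℕ) * v'.1 ∧
      ω ^ (i : ℕ) * v.2.1 = ω ^ (i' : ℕ) * v'.2.1 ∧
      ω ^ (j : ℕ) * v.2.2 = ω ^ (j' : ℕ) * v'.2.2 := by
    simpa only [twist, Prod.ext_iff] using fourier_omega_injective (congrArg Subtype.val h)
  obtain ⟨rfl, hy_eq⟩ := hy.eq_and_eq_of_omega_pow_mul_eq hy' hsnd
  obtain ⟨rfl, hz_eq⟩ := hz.eq_and_eq_of_omega_pow_mul_eq hz' hthd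
  have hx_eq := (isUnit_omega.pow (i + j)).neg.mul_left_cancel hfst
  obtain rfl : v = v' := Prod.ext hx_eq (Prod.ext hy_eq hz_eq)
  rfl

theorem IsPrimaryTriple.exists_fourier_omega_eq (hv : IsPrimaryTriple v) :
    ∃ w, fourier ω w = v := by
  obtain ⟨⟨a, ha⟩, ⟨b, hb⟩, ⟨c, hc⟩⟩ := hv
  refine ⟨(1, 0, 0) + fourier (ω ^ 2) (a, b, c), ?_⟩
  rw [fourier_add, fourier_one_zero_zero, fourier_fourier_sq one_add_omega_add_omega_sq]
  simp [← ha, ← hb, ← hc]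

theorem residue_eq_one_of_isPrimaryTriple_fourier (hv : IsPrimaryTriple (fourier ω v))
    (hnorm : 3 ∣ normSum v) : residue v.2.1 = 1 ∧ residue v.2.2 = 1 := by
  obtain ⟨hfst, hsnd, -⟩ := hv
  -- `ω - 1` times this element is the difference of the first two entries of `fourier ω v`.
  have hdiff : residue (v.2.1 + (ω + 1) * v.2.2) = 0 := by
    refine residue_eq_zero_of_three_dvd_omega_sub_one_mul ?_
    convert dvd_sub hsnd hfst using 1
    simp only [fourier]
    ring
  have hsum := residue_eq_zero_of_three_dvd hfst
  have hsq : residue v.1 ^ 2 + residue v.2.1 ^ 2 + residue v.2.2 ^ 2 = 0 := by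
    rw [residue_sq, residue_sq, residue_sq]
    exact_mod_cast (ZMod.intCast_zmod_eq_zero_iff_dvd _ 3).2 hnorm
  simp only [fourier, map_add, map_sub, map_mul, map_one, residue_omega] at hdiff hsum
  generalize residue v.1 = r, residue v.2.1 = s, residue v.2.2 = t at *
  revert r s t
  decide

theorem exists_twist_eq (hv : IsPrimaryTriple (fourier ω v)) (hnorm : 3 ∣ normSum v) :
    ∃ i j : Fin 3, ∃ w, IsPrimaryTriple w ∧ twist i j w = v := by
  obtain ⟨hres₁, hres₂⟩ := residue_eq_one_of_isPrimaryTriple_fourier hv hnorm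
  obtain ⟨i, hi⟩ := exists_three_dvd_sub_omega_pow hres₁
  obtain ⟨j, hj⟩ := exists_three_dvd_sub_omega_pow hres₂
  have hij : 3 ∣ v.1 - -ω ^ (i + j : ℕ) := by
    convert dvd_add (dvd_sub (dvd_sub hv.1 hi) hj) (three_dvd_one_sub_omega_pow_mul i j) using 1
    simp only [fourier]
    ring
  obtain ⟨x, hx, hvx⟩ := exists_isPrimary_eq_mul (isUnit_omega.pow (i + j)).neg hij
  obtain ⟨y, hy, hvy⟩ := exists_isPrimary_eq_mul (isUnit_omega.pow i) hi
  obtain ⟨z, hz, hvz⟩ := exists_isPrimary_eq_mul (isUnit_omega.pow j) hj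
  exact ⟨i, j, (x, y, z), ⟨hx, hy, hz⟩, Prod.ext hvx.symm (Prod.ext hvy.symm hvz.symm)⟩

theorem fourierTwist_surjective (m : ℤ) : Function.Surjective (fourierTwist (m := m)) := by
  rintro ⟨u, hu, hnorm⟩
  obtain ⟨v, rfl⟩ := hu.exists_fourier_omega_eq
  replace hnorm : normSum v = 3 * m := by
    rw [normSum_fourier_omega] at hnorm
    omega
  obtain ⟨i, j, w, hw, rfl⟩ := exists_twist_eq hu ⟨m, hnorm⟩
  exact ⟨⟨(i, j), w, hw, normSum_twist i j w ▸ hnorm⟩, rfl⟩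

theorem card_primaryTriple_nine_mul (m : ℤ) :
    Nat.card (PrimaryTriple (9 * m)) = 9 * Nat.card (PrimaryTriple (3 * m)) := by
  rw [← Nat.card_eq_of_bijective _ ⟨fourierTwist_injective m, fourierTwist_surjective m⟩]
  simp

end Eisenstein

section ThreeCore

open QuadraticAlgebra (norm)

/-- Charge vectors of `3`-cores as primary Eisenstein integers. The parametrisation is chosen so
that the norm form becomes `3 * |μ| + 1`. -/
def chargeEquivPrimary :
    {c : Fin 3 → ℤ // ∑ r, c r = 0} ≃ {z : Eisenstein // IsPrimary z} where
  toFun c := ⟨⟨1 + 3 * c.1 2, -3 * c.1 1⟩, isPrimary_iff.2 (by simp)⟩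
  invFun z := ⟨![-((z.1.re - 1) / 3) + z.1.im / 3, -(z.1.im / 3), (z.1.re - 1) / 3], by
    simp [Fin.sum_univ_three]⟩
  left_inv c := by
    have hc := c.2
    rw [Fin.sum_univ_three] at hc
    ext r
    fin_cases r <;> simp only [Fin.zero_eta, Fin.mk_one, Fin.reduceFinMk, Matrix.cons_val] <;> omega
  right_inv z := by
    have := isPrimary_iff.1 z.2
    ext <;> simp only [Matrix.cons_val] <;> omega

theorem two_mul_norm_chargeEquivPrimary (c : {c : Fin 3 → ℤ // ∑ r, c r = 0}) :
    2 * norm (chargeEquivPrimary c).1 = 3 * ∑ r, (3 * c.1 r ^ 2 + 2 * r * c.1 r) + 2 := by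
  have hc := c.2
  simp only [Fin.sum_univ_three] at hc
  simp only [norm_eq, chargeEquivPrimary, Equiv.coe_fn_mk, Fin.sum_univ_three, Fin.val_zero,
    Fin.val_one, Fin.val_two]
  push_cast
  linear_combination 9 * (c.1 1 + c.1 2 - c.1 0) * hc

/-- The bijection between `3`-cores and primary Eisenstein integers. -/
noncomputable def threeCoreEquivPrimary :
    {μ : YoungDiagram // μ.IsThreeCore} ≃ {z : Eisenstein // IsPrimary z} :=
  (coreEquivCharge 3).trans chargeEquivPrimary

theorem norm_threeCoreEquivPrimary (μ : {μ : YoungDiagram // μ.IsThreeCore}) :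
    norm (threeCoreEquivPrimary μ).1 = 3 * μ.1.card + 1 := by
  have hcard := two_mul_card_eq_sum_coreEquivCharge (t := 3) μ
  have hnorm : 2 * norm (threeCoreEquivPrimary μ).1 = _ :=
    two_mul_norm_chargeEquivPrimary (coreEquivCharge 3 μ)
  push_cast at hcard
  rw [← hcard] at hnorm
  omega

theorem card_symm_threeCoreEquivPrimary (z : {z : Eisenstein // IsPrimary z}) :
    3 * ((threeCoreEquivPrimary.symm z).1.card : ℤ) + 1 = norm z.1 := by
  rw [← norm_threeCoreEquivPrimary, Equiv.apply_symm_apply]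

/-- The bijection between the triples counted by `B3 n` and primary triples. -/
noncomputable def threeCoreTripleEquivPrimaryTriple (n : ℕ) :
    {p : YoungDiagram × YoungDiagram × YoungDiagram //
      p.1.card + p.2.1.card + p.2.2.card = n ∧
      p.1.IsThreeCore ∧ p.2.1.IsThreeCore ∧ p.2.2.IsThreeCore} ≃ PrimaryTriple (3 * (n + 1)) where
  toFun p :=
    let x := threeCoreEquivPrimary ⟨_, p.2.2.1⟩
    let y := threeCoreEquivPrimary ⟨_, p.2.2.2.1⟩
    let z := threeCoreEquivPrimary ⟨_, p.2.2.2.2⟩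
    ⟨(x, y, z), ⟨x.2, y.2, z.2⟩, by
      simp only [normSum, x, y, z, norm_threeCoreEquivPrimary]
      have := p.2.1
      omega⟩
  invFun v :=
    let κ := threeCoreEquivPrimary.symm ⟨_, v.2.1.1⟩
    let μ := threeCoreEquivPrimary.symm ⟨_, v.2.1.2.1⟩
    let ν := threeCoreEquivPrimary.symm ⟨_, v.2.1.2.2⟩
    ⟨(κ, μ, ν), by
      have := v.2.2
      simp only [normSum, ← card_symm_threeCoreEquivPrimary ⟨_, v.2.1.1⟩,
        ← card_symm_threeCoreEquivPrimary ⟨_, v.2.1.2.1⟩,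
        ← card_symm_threeCoreEquivPrimary ⟨_, v.2.1.2.2⟩] at this
      simp only [κ, μ, ν]
      omega, κ.2, μ.2, ν.2⟩
  left_inv p := by simp
  right_inv v := by simp

theorem B3_eq_card_primaryTriple (n : ℕ) : B3 n = Nat.card (PrimaryTriple (3 * (n + 1))) :=
  Nat.card_congr (threeCoreTripleEquivPrimaryTriple n)

theorem B3_three_mul_add_two (n : ℕ) : B3 (3 * n + 2) = 9 * B3 n := by
  have hindex : 3 * (((3 * n + 2 : ℕ) : ℤ) + 1) = 9 * (n + 1) := by
    push_cast
    ring
  rw [B3_eq_card_primaryTriple, B3_eq_card_primaryTriple, hindex, card_primaryTriple_nine_mul]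

end ThreeCore

end CorePartition

/-- For all k, n ≥ 0: B₃(3ᵏn + 3ᵏ − 1) = 3²ᵏ·B₃(n). -/
theorem B3_three_pow (k n : ℕ) :
    B3 (3 ^ k * n + 3 ^ k - 1) = 3 ^ (2 * k) * B3 n := by
  induction k with
  | zero => simp
  | succ k ih =>
    have hindex : 3 ^ (k + 1) * n + 3 ^ (k + 1) - 1 = 3 * (3 ^ k * n + 3 ^ k - 1) + 2 := by
      have : 0 < 3 ^ k := by positivity
      rw [pow_succ', mul_assoc]
      omega
    rw [hindex, CorePartition.B3_three_mul_add_two, ih]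
    ring
end

section
/- Let p be a prime with p ≡ 1 (mod 3), and let k, n be nonnegative integers such that p does not divide n+1. Then (p² − 1)·B_3(p^k·n + p^k − 1) = (p^{2(k+1)} − 1)·B_3(n). -/
/-!
A 3-core is determined by its set of first-column hook lengths. This set avoids `0` and is closed
under subtracting `3`, so it consists of an initial segment of `{1, 4, 7, …}` and one of
`{2, 5, 8, …}`. If these have `a` and `b` elements, the core has size `a² - a b + b² + b`, and
completing the square turns the pairs `(a, b)` belonging to `n` into the Eisenstein integers
`(3 a + 1) + (3 b + 2) ω` of norm `9 n + 3`, which represent the elements of this norm up to units.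
Unique factorization then gives `a₃(n) = ∑ χ(d)` over the divisors `d` of `3 n + 1`, where `χ` is
the nontrivial character modulo `3`.

The convolutions `A₃ = a₃ * a₃` and `B₃ = A₃ * a₃` become sums over the positive solutions of
`a x + b y = N`. Liouville's substitution `(a + b) x + b y = a x + b (x + y)` makes the terms of
such sums cancel in pairs except on the diagonal `a = b`, leaving `3 A₃(n) = σ(3 n + 2)` and
`B₃(n) = ∑ χ(d) e²` over `d e = n + 1`. The right-hand side is multiplicative in `n + 1`.
-/

open ArithmeticFunction Finset
open scoped ArithmeticFunction.sigma ArithmeticFunction.zeta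

/-! ### The character modulo three and its divisor sums -/

/-- The nontrivial character modulo 3, that is the Legendre symbol `n ↦ (n / 3)`, as an arithmetic
function. -/
def chi : ArithmeticFunction ℤ where
  toFun n := quadraticChar (ZMod 3) n
  map_zero' := by simp

lemma chi_apply (n : ℕ) : chi n = if n % 3 = 1 then 1 else if n % 3 = 2 then -1 else 0 := by
  have residues : ∀ r < 3, quadraticChar (ZMod 3) (r : ℕ) =
      if r = 1 then 1 else if r = 2 then -1 else 0 := by decide
  rw [← residues _ (Nat.mod_lt n three_pos), ZMod.natCast_mod]
  rfl

lemma chi_mul (m n : ℕ) : chi (m * n) = chi m * chi n := by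
  simp only [chi, coe_mk, Nat.cast_mul, map_mul]

lemma isMultiplicative_chi : chi.IsMultiplicative :=
  ⟨by simp [chi], fun _ => chi_mul _ _⟩

lemma chi_pow (n k : ℕ) : chi (n ^ k) = chi n ^ k := by
  simp only [chi, coe_mk, Nat.cast_pow, map_pow]

/-- The divisor sum `n ↦ ∑ d ∣ n, χ(d)`: the coefficients of the Dedekind zeta function of
`ℚ(√-3)`. -/
def chiZeta : ArithmeticFunction ℤ := chi * ζ

/-- The divisor sum `n ↦ ∑ d * e = n, χ(d) e²`. -/
def chiPowTwo : ArithmeticFunction ℤ := chi * (pow 2 : ArithmeticFunction ℕ)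

lemma isMultiplicative_chiZeta : chiZeta.IsMultiplicative :=
  isMultiplicative_chi.mul isMultiplicative_zeta.natCast

lemma isMultiplicative_chiPowTwo : chiPowTwo.IsMultiplicative :=
  isMultiplicative_chi.mul isMultiplicative_pow.natCast

lemma chiZeta_apply (n : ℕ) : chiZeta n = ∑ d ∈ n.divisors, chi d :=
  coe_mul_zeta_apply

lemma chiPowTwo_apply (n : ℕ) :
    chiPowTwo n = ∑ q ∈ n.divisorsAntidiagonal, chi q.1 * (q.2 : ℤ) ^ 2 := by
  simp [chiPowTwo, ArithmeticFunction.mul_apply, pow_apply]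

lemma chiZeta_prime_pow {p : ℕ} (hp : p.Prime) (k : ℕ) :
    chiZeta (p ^ k) = ∑ i ∈ range (k + 1), chi p ^ i := by
  simp only [chiZeta_apply, Nat.sum_divisors_prime_pow hp, chi_pow]

lemma chiZeta_three_mul_of_coprime {n : ℕ} (hn : Nat.Coprime 3 n) :
    chiZeta (3 * n) = chiZeta n := by
  have hthree : chiZeta 3 = 1 := by
    simpa [sum_range_succ, chi_apply] using chiZeta_prime_pow Nat.prime_three 1
  rw [isMultiplicative_chiZeta.map_mul_of_coprime hn, hthree, one_mul]

lemma chiPowTwo_prime_pow {p : ℕ} (hp : p.Prime) (hp3 : p % 3 = 1) (k : ℕ) :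
    ((p : ℤ) ^ 2 - 1) * chiPowTwo (p ^ k) = (p : ℤ) ^ (2 * (k + 1)) - 1 := by
  have chi_p : chi p = 1 := by rw [chi_apply, if_pos hp3]
  have sum_eq : chiPowTwo (p ^ k) = ∑ i ∈ range (k + 1), ((p : ℤ) ^ 2) ^ i := by
    rw [chiPowTwo_apply, Nat.sum_divisorsAntidiagonal' fun d e => chi d * (e : ℤ) ^ 2,
      Nat.sum_divisors_prime_pow hp]
    refine sum_congr rfl fun i hi => ?_
    rw [Nat.pow_div (by simpa [Nat.lt_succ_iff] using hi) hp.pos, chi_pow, chi_p, one_pow, one_mul]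
    push_cast
    exact pow_right_comm _ _ _
  rw [sum_eq, mul_geom_sum, ← pow_mul]

lemma chiZeta_eq_zero_of_mod_eq_two {n : ℕ} (hn : n % 3 = 2) : chiZeta n = 0 := by
  have chi_n : chi n = -1 := by simp [chi_apply, hn]
  have antisymm : chiZeta n = -chiZeta n := calc
    chiZeta n = ∑ q ∈ n.divisorsAntidiagonal, chi q.1 := by
      rw [chiZeta_apply, Nat.sum_divisorsAntidiagonal fun d _ => chi d]
    _ = ∑ q ∈ n.divisorsAntidiagonal, -chi q.2 := by
      refine sum_congr rfl fun q hq => ?_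
      have h : chi q.1 * chi q.2 = -1 := by
        rw [← chi_mul, (Nat.mem_divisorsAntidiagonal.1 hq).1, chi_n]
      rcases Int.eq_one_or_neg_one_of_mul_eq_neg_one h with h1 | h1 <;> rw [h1] at h ⊢ <;> omega
    _ = -chiZeta n := by
      rw [sum_neg_distrib, chiZeta_apply, Nat.sum_divisorsAntidiagonal' fun _ d => chi d]
  omega

/-! ### Liouville's method -/

/-- The positive solutions `(a, b, x, y)` of `a * x + b * y = N`. -/
def quadruples (N : ℕ) : Finset (ℕ × ℕ × ℕ × ℕ) :=
  (range (N + 1) ×ˢ range (N + 1) ×ˢ range (N + 1) ×ˢ range (N + 1)).filter fun (a, b, x, y) =>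
    0 < a ∧ 0 < b ∧ 0 < x ∧ 0 < y ∧ a * x + b * y = N

lemma mem_quadruples {N a b x y : ℕ} : (a, b, x, y) ∈ quadruples N ↔
    0 < a ∧ 0 < b ∧ 0 < x ∧ 0 < y ∧ a * x + b * y = N := by
  simp only [quadruples, mem_filter, mem_product, mem_range, and_iff_right_iff_imp]
  rintro ⟨ha, hb, hx, hy, rfl⟩
  have := Nat.le_mul_of_pos_right a hx
  have := Nat.le_mul_of_pos_left x ha
  have := Nat.le_mul_of_pos_right b hy
  have := Nat.le_mul_of_pos_left y hb
  omega

/-- The sum of `w a b x y` over the positive solutions of `a * x + b * y = N`, as in Liouville's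
elementary method. -/
def quadSum {M : Type*} [AddCommMonoid M] (N : ℕ) (w : ℕ → ℕ → ℕ → ℕ → M) : M :=
  ∑ q ∈ quadruples N, w q.1 q.2.1 q.2.2.1 q.2.2.2

section AddCommMonoid

variable {M : Type*} [AddCommMonoid M] {N : ℕ}

lemma quadSum_congr {v w : ℕ → ℕ → ℕ → ℕ → M}
    (h : ∀ a b x y, 0 < a → 0 < b → 0 < x → 0 < y → a * x + b * y = N → v a b x y = w a b x y) :
    quadSum N v = quadSum N w := by
  refine sum_congr rfl fun ⟨a, b, x, y⟩ hq => ?_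
  obtain ⟨ha, hb, hx, hy, hN⟩ := mem_quadruples.1 hq
  exact h a b x y ha hb hx hy hN

lemma quadSum_add (v w : ℕ → ℕ → ℕ → ℕ → M) :
    quadSum N (fun a b x y => v a b x y + w a b x y) = quadSum N v + quadSum N w :=
  sum_add_distrib

lemma quadSum_swap (w : ℕ → ℕ → ℕ → ℕ → M) :
    quadSum N w = quadSum N fun a b x y => w b a y x := by
  refine sum_nbij' (fun q => (q.2.1, q.1, q.2.2.2, q.2.2.1))
    (fun q => (q.2.1, q.1, q.2.2.2, q.2.2.1)) ?_ ?_ ?_ ?_ ?_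
  case _ | _ =>
    rintro ⟨a, b, x, y⟩ hq
    rw [mem_quadruples] at hq ⊢
    rw [add_comm (b * y)]
    tauto
  all_goals exact fun _ _ => rfl

lemma quadSum_transpose_left (w : ℕ → ℕ → ℕ → ℕ → M) :
    quadSum N w = quadSum N fun a b x y => w x b a y := by
  refine sum_nbij' (fun q => (q.2.2.1, q.2.1, q.1, q.2.2.2))
    (fun q => (q.2.2.1, q.2.1, q.1, q.2.2.2)) ?_ ?_ ?_ ?_ ?_
  case _ | _ =>
    rintro ⟨a, b, x, y⟩ hq
    rw [mem_quadruples] at hq ⊢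
    rw [mul_comm x a]
    tauto
  all_goals exact fun _ _ => rfl

lemma quadSum_transpose_right (w : ℕ → ℕ → ℕ → ℕ → M) :
    quadSum N w = quadSum N fun a b x y => w a y x b := by
  rw [quadSum_swap, quadSum_transpose_left, quadSum_swap]

lemma quadSum_antitranspose (w : ℕ → ℕ → ℕ → ℕ → M) :
    quadSum N w = quadSum N fun a b x y => w y x b a := by
  rw [quadSum_swap, quadSum_transpose_left, quadSum_transpose_right]

/-- Liouville's substitution: `(a + b) * x + b * y = a * x + b * (x + y)`. -/
lemma quadSum_shear {v w : ℕ → ℕ → ℕ → ℕ → M}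
    (h : ∀ a b x y, v (a + b) b x y = w a b x (x + y)) :
    quadSum N (fun a b x y => if b < a then v a b x y else 0) =
      quadSum N (fun a b x y => if x < y then w a b x y else 0) := by
  unfold quadSum
  rw [← sum_filter, ← sum_filter]
  refine sum_nbij' (fun q => (q.1 - q.2.1, q.2.1, q.2.2.1, q.2.2.1 + q.2.2.2))
    (fun q => (q.1 + q.2.1, q.2.1, q.2.2.1, q.2.2.2 - q.2.2.1)) ?_ ?_ ?_ ?_ ?_
  · rintro ⟨a, b, x, y⟩ hq
    simp only [mem_filter, mem_quadruples] at hq ⊢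
    obtain ⟨⟨-, hb, hx, hy, rfl⟩, hlt⟩ := hq
    obtain ⟨c, rfl⟩ := Nat.exists_eq_add_of_le' hlt.le
    exact ⟨⟨by omega, hb, hx, by omega, by rw [Nat.add_sub_cancel]; ring⟩, by omega⟩
  · rintro ⟨a, b, x, y⟩ hq
    simp only [mem_filter, mem_quadruples] at hq ⊢
    obtain ⟨⟨ha, hb, hx, -, rfl⟩, hlt⟩ := hq
    obtain ⟨c, rfl⟩ := Nat.exists_eq_add_of_le' hlt.le
    exact ⟨⟨by omega, hb, hx, by omega, by rw [Nat.add_sub_cancel]; ring⟩, by omega⟩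
  · rintro ⟨a, b, x, y⟩ hq
    have hlt : b < a := (mem_filter.1 hq).2
    simp [Nat.sub_add_cancel hlt.le]
  · rintro ⟨a, b, x, y⟩ hq
    have hlt : x < y := (mem_filter.1 hq).2
    simp [Nat.add_sub_cancel' hlt.le]
  · rintro ⟨a, b, x, y⟩ hq
    have hlt : b < a := (mem_filter.1 hq).2
    simpa [Nat.sub_add_cancel hlt.le] using h (a - b) b x y

lemma quadSum_shear' {v w : ℕ → ℕ → ℕ → ℕ → M}
    (h : ∀ a b x y, v a (a + b) x y = w a b (x + y) y) :
    quadSum N (fun a b x y => if a < b then v a b x y else 0) =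
      quadSum N (fun a b x y => if y < x then w a b x y else 0) := by
  rw [quadSum_swap, quadSum_shear (w := fun a b x y => w b a y x), quadSum_swap]
  intro a b x y
  rw [add_comm a, h, add_comm x]

lemma quadSum_split_left (w : ℕ → ℕ → ℕ → ℕ → M) :
    quadSum N w = quadSum N (fun a b x y => if b < a then w a b x y else 0) +
      quadSum N (fun a b x y => if a < b then w a b x y else 0) +
      quadSum N (fun a b x y => if a = b then w a b x y else 0) := by
  rw [← quadSum_add, ← quadSum_add]
  refine quadSum_congr fun a b x y _ _ _ _ _ => ?_
  rcases lt_trichotomy a b with h | h | h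
  · simp [h, h.ne, h.not_gt]
  · simp [h]
  · simp [h, h.ne', h.not_gt]

lemma quadSum_split_right (w : ℕ → ℕ → ℕ → ℕ → M) :
    quadSum N w = quadSum N (fun a b x y => if x < y then w a b x y else 0) +
      quadSum N (fun a b x y => if y < x then w a b x y else 0) +
      quadSum N (fun a b x y => if x = y then w a b x y else 0) := by
  rw [quadSum_antitranspose, quadSum_split_left]
  refine congrArg₂ _ (congrArg₂ _ (quadSum_antitranspose _) (quadSum_antitranspose _)) ?_
  rw [quadSum_antitranspose]
  simp only [eq_comm]

lemma quadSum_eq_zero {w : ℕ → ℕ → ℕ → ℕ → M} (h : ∀ a b x y, w a b x y = 0) :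
    quadSum N w = 0 :=
  sum_eq_zero fun _ _ => h _ _ _ _

end AddCommMonoid

lemma quadSum_sub {M : Type*} [AddCommGroup M] {N : ℕ} (v w : ℕ → ℕ → ℕ → ℕ → M) :
    quadSum N (fun a b x y => v a b x y - w a b x y) = quadSum N v - quadSum N w :=
  sum_sub_distrib _ _

section FirstIdentity

/-- The indicator of `a ≡ b ≡ x ≡ y ≢ 0 (mod 3)`. -/
def allEqual (a b x y : ℕ) : ℤ :=
  if a % 3 ≠ 0 ∧ a % 3 = b % 3 ∧ a % 3 = x % 3 ∧ a % 3 = y % 3 then 1 else 0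

/-- The indicator of `a ≡ x ≡ -b ≡ -y ≢ 0 (mod 3)`. -/
def crossEqual (a b x y : ℕ) : ℤ :=
  if a % 3 ≠ 0 ∧ a % 3 = x % 3 ∧ b % 3 = y % 3 ∧ (a + b) % 3 = 0 then 1 else 0

/-- The indicator of `a ≡ 0` and `b ≡ x ≡ -y ≢ 0 (mod 3)`. -/
def zeroOpposite (a b x y : ℕ) : ℤ :=
  if a % 3 = 0 ∧ b % 3 ≠ 0 ∧ b % 3 = x % 3 ∧ (x + y) % 3 = 0 then 1 else 0

/-- The indicator of `a ≡ 0` and `x ≡ y ≡ -b ≢ 0 (mod 3)`. -/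
def zeroEqual (a b x y : ℕ) : ℤ :=
  if a % 3 = 0 ∧ b % 3 ≠ 0 ∧ x % 3 = y % 3 ∧ (x + b) % 3 = 0 then 1 else 0

variable {N : ℕ}

lemma quadSum_allEqual :
    quadSum N allEqual =
      2 * quadSum N (fun a b x y => if x < y then zeroOpposite a b x y else 0) +
        quadSum N (fun a b x y => if a = b then allEqual a b x y else 0) := by
  have lower_eq_upper : quadSum N (fun a b x y => if a < b then allEqual a b x y else 0) =
      quadSum N (fun a b x y => if b < a then allEqual a b x y else 0) := by
    rw [quadSum_swap]
    refine quadSum_congr fun a b x y _ _ _ _ _ => ?_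
    simp only [allEqual]
    split_ifs <;> omega
  have upper : quadSum N (fun a b x y => if b < a then allEqual a b x y else 0) =
      quadSum N (fun a b x y => if x < y then zeroOpposite a b x y else 0) := by
    refine quadSum_shear fun a b x y => ?_
    simp only [allEqual, zeroOpposite]
    split_ifs <;> omega
  rw [quadSum_split_left, lower_eq_upper, upper, two_mul]

lemma quadSum_crossEqual :
    quadSum N crossEqual =
      2 * quadSum N (fun a b x y => if x < y then crossEqual a b x y else 0) := by
  have lower_eq_upper : quadSum N (fun a b x y => if y < x then crossEqual a b x y else 0) =
      quadSum N (fun a b x y => if x < y then crossEqual a b x y else 0) := by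
    rw [quadSum_swap]
    refine quadSum_congr fun a b x y _ _ _ _ _ => ?_
    simp only [crossEqual]
    split_ifs <;> omega
  have diagonal : quadSum N (fun a b x y => if x = y then crossEqual a b x y else 0) = 0 := by
    refine quadSum_eq_zero fun a b x y => ?_
    simp only [crossEqual]
    split_ifs <;> omega
  rw [quadSum_split_right, lower_eq_upper, diagonal, two_mul, add_zero]

lemma quadSum_zeroOpposite_eq_crossEqual :
    quadSum N (fun a b x y => if x < y then zeroOpposite a b x y else 0) =
      quadSum N (fun a b x y => if x < y then crossEqual a b x y else 0) := by
  have transpose : quadSum N zeroOpposite = quadSum N zeroEqual := by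
    rw [quadSum_transpose_right]
    refine quadSum_congr fun a b x y _ _ _ _ _ => ?_
    simp only [zeroEqual, zeroOpposite]
    split_ifs <;> omega
  have lower : quadSum N (fun a b x y => if a < b then zeroEqual a b x y else 0) =
      quadSum N (fun a b x y => if y < x then zeroOpposite a b x y else 0) := by
    refine quadSum_shear' fun a b x y => ?_
    simp only [zeroEqual, zeroOpposite]
    split_ifs <;> omega
  have upper : quadSum N (fun a b x y => if b < a then zeroEqual a b x y else 0) =
      quadSum N (fun a b x y => if x < y then crossEqual a b x y else 0) := by
    refine quadSum_shear fun a b x y => ?_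
    simp only [zeroEqual, crossEqual]
    split_ifs <;> omega
  have diagonal : quadSum N (fun a b x y => if a = b then zeroEqual a b x y else 0) = 0 := by
    refine quadSum_eq_zero fun a b x y => ?_
    simp only [zeroEqual]
    split_ifs <;> omega
  have diagonal' : quadSum N (fun a b x y => if x = y then zeroOpposite a b x y else 0) = 0 := by
    refine quadSum_eq_zero fun a b x y => ?_
    simp only [zeroOpposite]
    split_ifs <;> omega
  rw [quadSum_split_right, quadSum_split_left zeroEqual] at transpose
  linarith

lemma quadSum_chi_mul_chi :
    quadSum N (fun a b x y => if a % 3 = x % 3 ∧ b % 3 = y % 3 then chi a * chi b else 0) =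
      quadSum N (fun a b x y => if a = b then allEqual a b x y else 0) := by
  have split : quadSum N
      (fun a b x y => if a % 3 = x % 3 ∧ b % 3 = y % 3 then chi a * chi b else 0) =
        quadSum N allEqual - quadSum N crossEqual := by
    rw [← quadSum_sub]
    refine quadSum_congr fun a b x y _ _ _ _ _ => ?_
    simp only [chi_apply, allEqual, crossEqual]
    split_ifs <;> omega
  rw [split, quadSum_allEqual, quadSum_crossEqual, quadSum_zeroOpposite_eq_crossEqual]
  ring

end FirstIdentity

section SecondIdentity

/-- The weight `χ(b)` on the quadruples with `a ≡ b ≡ x ≡ -y (mod 3)`. -/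
def signLastOpposite (a b x y : ℕ) : ℤ :=
  if a % 3 = b % 3 ∧ b % 3 = x % 3 ∧ (y + a) % 3 = 0 then chi b else 0

/-- The weight `χ(a)` on the quadruples with `b ≡ x ≡ y ≡ -a (mod 3)`. -/
def signFirstOpposite (a b x y : ℕ) : ℤ :=
  if (a + b) % 3 = 0 ∧ b % 3 = x % 3 ∧ b % 3 = y % 3 then chi a else 0

/-- The weight `χ(b)` on the quadruples with `a ≡ y ≡ 0` and `b ≡ x (mod 3)`. -/
def signOuterZero (a b x y : ℕ) : ℤ :=
  if a % 3 = 0 ∧ y % 3 = 0 ∧ b % 3 = x % 3 then chi b else 0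

/-- The weight `χ(a)` on the quadruples with `b ≡ x ≡ 0` and `y ≡ -a (mod 3)`. -/
def signInnerZero (a b x y : ℕ) : ℤ :=
  if b % 3 = 0 ∧ x % 3 = 0 ∧ (y + a) % 3 = 0 then chi a else 0

lemma signFirstOpposite_antitranspose (a b x y : ℕ) :
    signFirstOpposite y x b a = -signLastOpposite a b x y := by
  simp only [signFirstOpposite, signLastOpposite, chi_apply]
  split_ifs <;> omega

lemma signOuterZero_antitranspose (a b x y : ℕ) :
    signOuterZero y x b a = signOuterZero a b x y := by
  simp only [signOuterZero, chi_apply]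
  split_ifs <;> omega

lemma signInnerZero_antitranspose (a b x y : ℕ) :
    signInnerZero y x b a = -signInnerZero a b x y := by
  simp only [signInnerZero, chi_apply]
  split_ifs <;> omega

lemma signLastOpposite_shear (a b x y : ℕ) :
    signLastOpposite (a + b) b x y = signOuterZero a b x (x + y) := by
  simp only [signLastOpposite, signOuterZero, chi_apply]
  split_ifs <;> omega

lemma signLastOpposite_shear' (a b x y : ℕ) :
    signLastOpposite a (a + b) x y = signInnerZero a b (x + y) y := by
  simp only [signLastOpposite, signInnerZero, chi_apply]
  split_ifs <;> omega

lemma signOuterZero_shear (a b x y : ℕ) :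
    signOuterZero (a + b) b x y = -signFirstOpposite a b x (x + y) := by
  simp only [signOuterZero, signFirstOpposite, chi_apply]
  split_ifs <;> omega

lemma signOuterZero_shear' (a b x y : ℕ) :
    signOuterZero a (a + b) x y = signOuterZero a b (x + y) y := by
  simp only [signOuterZero, chi_apply]
  split_ifs <;> omega

lemma signInnerZero_shear (a b x y : ℕ) :
    signInnerZero (a + b) b x y = signInnerZero a b x (x + y) := by
  simp only [signInnerZero, chi_apply]
  split_ifs <;> omega

lemma signInnerZero_shear' (a b x y : ℕ) :
    signInnerZero a (a + b) x y = signFirstOpposite a b (x + y) y := by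
  simp only [signInnerZero, signFirstOpposite, chi_apply]
  split_ifs <;> omega

variable {N : ℕ}

lemma quadSum_signOuterZero_mul_first :
    quadSum N (fun a b x y => if x < y then signOuterZero a b x y * a else 0) =
      quadSum N (fun a b x y => if b < a then signOuterZero a b x y * a else 0) := by
  have lower : quadSum N (fun a b x y => if a < b then signOuterZero a b x y * a else 0) =
      quadSum N (fun a b x y => if y < x then signOuterZero a b x y * a else 0) :=
    quadSum_shear' fun a b x y => by rw [signOuterZero_shear']
  have vanish (a x y : ℕ) : signOuterZero a a x y = 0 := by
    simp only [signOuterZero, chi_apply]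
    split_ifs <;> omega
  have vanish' (a b x : ℕ) : signOuterZero a b x x = 0 := by
    simp only [signOuterZero, chi_apply]
    split_ifs <;> omega
  have diagonal :
      quadSum N (fun a b x y => if a = b then signOuterZero a b x y * a else 0) = 0 :=
    quadSum_eq_zero fun a b x y => ite_eq_right_iff.2 fun h => by rw [h, vanish, zero_mul]
  have diagonal' :
      quadSum N (fun a b x y => if x = y then signOuterZero a b x y * a else 0) = 0 :=
    quadSum_eq_zero fun a b x y => ite_eq_right_iff.2 fun h => by rw [h, vanish', zero_mul]
  have total := quadSum_split_left (N := N) fun a b x y => signOuterZero a b x y * a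
  rw [quadSum_split_right] at total
  linarith

lemma quadSum_signInnerZero_mul_second :
    quadSum N (fun a b x y => if y < x then signInnerZero a b x y * b else 0) =
      quadSum N (fun a b x y => if a < b then signInnerZero a b x y * b else 0) := by
  have upper : quadSum N (fun a b x y => if b < a then signInnerZero a b x y * b else 0) =
      quadSum N (fun a b x y => if x < y then signInnerZero a b x y * b else 0) :=
    quadSum_shear fun a b x y => by rw [signInnerZero_shear]
  have vanish (a x y : ℕ) : signInnerZero a a x y = 0 := by
    simp only [signInnerZero, chi_apply]
    split_ifs <;> omega
  have vanish' (a b x : ℕ) : signInnerZero a b x x = 0 := by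
    simp only [signInnerZero, chi_apply]
    split_ifs <;> omega
  have diagonal :
      quadSum N (fun a b x y => if a = b then signInnerZero a b x y * b else 0) = 0 :=
    quadSum_eq_zero fun a b x y => ite_eq_right_iff.2 fun h => by rw [h, vanish, zero_mul]
  have diagonal' :
      quadSum N (fun a b x y => if x = y then signInnerZero a b x y * b else 0) = 0 :=
    quadSum_eq_zero fun a b x y => ite_eq_right_iff.2 fun h => by rw [h, vanish', zero_mul]
  have total := quadSum_split_left (N := N) fun a b x y => signInnerZero a b x y * b
  rw [quadSum_split_right] at total
  linarith

lemma quadSum_signOuterZero :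
    quadSum N (fun a b x y => if x < y then signOuterZero a b x y * (x - a) else 0) =
      quadSum N (fun a b x y => if x < y then signFirstOpposite a b x y * a else 0) := calc
  _ = quadSum N (fun a b x y => if x < y then signOuterZero a b x y * x else 0) -
      quadSum N (fun a b x y => if x < y then signOuterZero a b x y * a else 0) := by
    simp only [← quadSum_sub, ite_sub_ite, sub_zero, mul_sub]
  _ = quadSum N (fun a b x y => if b < a then signOuterZero a b x y * (b - a) else 0) := by
    rw [quadSum_signOuterZero_mul_first, quadSum_antitranspose]
    simp only [signOuterZero_antitranspose, ← quadSum_sub, ite_sub_ite, sub_zero, mul_sub]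
  _ = _ := quadSum_shear fun a b x y => by
    rw [signOuterZero_shear]
    push_cast
    ring

lemma quadSum_signInnerZero :
    quadSum N (fun a b x y => if y < x then signInnerZero a b x y * (b + x - y) else 0) =
      quadSum N (fun a b x y => if y < x then signFirstOpposite a b x y * a else 0) := calc
  _ = quadSum N (fun a b x y => if y < x then signInnerZero a b x y * b else 0) +
      quadSum N (fun a b x y => if y < x then signInnerZero a b x y * (x - y) else 0) := by
    simp only [← quadSum_add, ite_add_ite, add_zero, mul_add, add_sub_assoc]
  _ = quadSum N (fun a b x y => if a < b then signInnerZero a b x y * a else 0) := by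
    rw [quadSum_signInnerZero_mul_second,
      quadSum_antitranspose fun a b x y => if y < x then _ else _, ← quadSum_add]
    refine quadSum_congr fun a b x y _ _ _ _ _ => ?_
    rw [signInnerZero_antitranspose]
    split_ifs <;> ring
  _ = _ := quadSum_shear' fun a b x y => by rw [signInnerZero_shear']

lemma quadSum_signLastOpposite_symmetrize :
    quadSum N (fun a b x y => signLastOpposite a b x y * b) =
      quadSum N (fun a b x y => signLastOpposite a b x y * (b + x - a)) := by
  have transpose (a b x y : ℕ) : signLastOpposite x b a y = signLastOpposite a b x y := by
    simp only [signLastOpposite, chi_apply]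
    split_ifs <;> omega
  have exchange := quadSum_transpose_left (N := N) fun a b x y => signLastOpposite a b x y * a
  simp only [transpose] at exchange
  simp only [mul_sub, mul_add, quadSum_sub, quadSum_add, exchange, add_sub_cancel_right]

lemma quadSum_signLastOpposite_sub_signFirstOpposite :
    quadSum N (fun a b x y => signLastOpposite a b x y * b) -
        quadSum N (fun a b x y => signFirstOpposite a b x y * a) =
      quadSum N (fun a b x y => if a = b then signLastOpposite a b x y * (x + y) else 0) := by
  have upper :
      quadSum N (fun a b x y => if b < a then signLastOpposite a b x y * (b + x - a) else 0) =
        quadSum N (fun a b x y => if x < y then signFirstOpposite a b x y * a else 0) := by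
    rw [← quadSum_signOuterZero]
    refine quadSum_shear fun a b x y => ?_
    rw [signLastOpposite_shear]
    push_cast
    ring
  have lower :
      quadSum N (fun a b x y => if a < b then signLastOpposite a b x y * (b + x - a) else 0) =
        quadSum N (fun a b x y => if y < x then signFirstOpposite a b x y * a else 0) := by
    rw [← quadSum_signInnerZero]
    refine quadSum_shear' fun a b x y => ?_
    rw [signLastOpposite_shear']
    push_cast
    ring
  rw [quadSum_signLastOpposite_symmetrize, quadSum_split_left, upper, lower,
    quadSum_split_right fun a b x y => signFirstOpposite a b x y * a,
    quadSum_antitranspose fun a b x y => if x = y then _ else _, add_sub_add_left_eq_sub,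
    ← quadSum_sub]
  refine quadSum_congr fun a b x y _ _ _ _ _ => ?_
  rw [signFirstOpposite_antitranspose]
  by_cases h : a = b
  · subst h
    simp only [if_true]
    ring
  · simp only [h, Ne.symm h, if_false, sub_zero]

end SecondIdentity

lemma quadSum_mul {R : Type*} [Semiring R] (N : ℕ) (f g : ℕ → ℕ → R) :
    quadSum N (fun a b x y => f a x * g b y) =
      ∑ uv ∈ antidiagonal N, (∑ q ∈ uv.1.divisorsAntidiagonal, f q.1 q.2) *
        ∑ q ∈ uv.2.divisorsAntidiagonal, g q.1 q.2 := by
  simp only [sum_mul_sum, ← sum_product', quadSum, sum_sigma']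
  refine sum_bij' (fun q _ => ⟨(q.1 * q.2.2.1, q.2.1 * q.2.2.2), (q.1, q.2.2.1), (q.2.1, q.2.2.2)⟩)
    (fun p _ => (p.2.1.1, p.2.2.1, p.2.1.2, p.2.2.2)) ?_ ?_ ?_ ?_ ?_
  · rintro ⟨a, b, x, y⟩ hq
    obtain ⟨ha, hb, hx, hy, hN⟩ := mem_quadruples.1 hq
    simp [hN, ha.ne', hb.ne', hx.ne', hy.ne']
  · rintro ⟨⟨u, v⟩, ⟨a, x⟩, ⟨b, y⟩⟩ hp
    simp only [mem_sigma, HasAntidiagonal.mem_antidiagonal, mem_product,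
      Nat.mem_divisorsAntidiagonal] at hp
    obtain ⟨hN, ⟨rfl, hu⟩, rfl, hv⟩ := hp
    rw [mul_ne_zero_iff, ← pos_iff_ne_zero, ← pos_iff_ne_zero] at hu hv
    exact mem_quadruples.2 ⟨hu.1, hv.1, hu.2, hv.2, hN⟩
  · exact fun _ _ => rfl
  · rintro ⟨⟨u, v⟩, ⟨a, x⟩, ⟨b, y⟩⟩ hp
    simp only [mem_sigma, mem_product, Nat.mem_divisorsAntidiagonal] at hp
    obtain ⟨-, ⟨rfl, -⟩, rfl, -⟩ := hp
    rfl
  · exact fun _ _ => rfl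

lemma quadSum_diagonal {M : Type*} [AddCommMonoid M] (N : ℕ) (w : ℕ → ℕ → ℕ → ℕ → M) :
    quadSum N (fun a b x y => if a = b then w a b x y else 0) =
      ∑ q ∈ N.divisorsAntidiagonal, ∑ x ∈ Ioo 0 q.2, w q.1 q.1 x (q.2 - x) := by
  rw [quadSum, ← sum_filter, sum_sigma']
  refine sum_bij' (fun q _ => ⟨(q.1, q.2.2.1 + q.2.2.2), q.2.2.1⟩)
    (fun p _ => (p.1.1, p.1.1, p.2, p.1.2 - p.2)) ?_ ?_ ?_ ?_ ?_
  · rintro ⟨a, b, x, y⟩ hq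
    simp only [mem_filter, mem_quadruples] at hq
    obtain ⟨⟨ha, -, hx, hy, rfl⟩, rfl⟩ := hq
    simp [mul_add, ha.ne', hx, hx.ne', hy]
  · rintro ⟨⟨a, e⟩, x⟩ hp
    simp only [mem_sigma, Nat.mem_divisorsAntidiagonal, mem_Ioo] at hp
    obtain ⟨⟨rfl, hne⟩, hx, hxe⟩ := hp
    have ha : 0 < a := Nat.pos_of_ne_zero (left_ne_zero_of_mul hne)
    simp only [mem_filter, mem_quadruples, and_true]
    exact ⟨ha, ha, hx, by omega, by rw [← mul_add, Nat.add_sub_cancel' hxe.le]⟩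
  · rintro ⟨a, b, x, y⟩ hq
    obtain rfl : a = b := (mem_filter.1 hq).2
    simp
  · rintro ⟨⟨a, e⟩, x⟩ hp
    have hxe : x < e := (mem_Ioo.1 (mem_sigma.1 hp).2).2
    simp [Nat.add_sub_cancel' hxe.le]
  · rintro ⟨a, b, x, y⟩ hq
    obtain rfl : a = b := (mem_filter.1 hq).2
    simp

lemma sum_antidiagonal_eq_sum_residue {M : Type*} [AddCommMonoid M] {d r s : ℕ} (hr : r < d)
    (m : ℕ) {f : ℕ × ℕ → M} (hf : ∀ q, q.2 % d ≠ s → f q = 0) :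
    ∑ q ∈ antidiagonal (d * m + r + s), f q =
      ∑ q ∈ antidiagonal m, f (d * q.1 + r, d * q.2 + s) := by
  symm
  refine sum_of_injOn (fun q => (d * q.1 + r, d * q.2 + s)) ?_ ?_ ?_ fun _ _ => rfl
  · rintro ⟨i, j⟩ - ⟨i', j'⟩ -
    simp [(Nat.zero_lt_of_lt hr).ne']
  · rintro ⟨i, j⟩ hij
    rw [mem_coe, HasAntidiagonal.mem_antidiagonal] at hij ⊢
    rw [← hij]
    ring
  · rintro ⟨u, v⟩ huv hnot
    rw [HasAntidiagonal.mem_antidiagonal] at huv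
    refine hf _ fun hv => hnot ?_
    have hv' : v = d * (v / d) + s := by rw [← hv, Nat.div_add_mod]
    have hle : v / d ≤ m := by
      refine Nat.lt_succ_iff.1 (lt_of_mul_lt_mul_left (a := d) ?_ d.zero_le)
      rw [Nat.mul_succ]
      omega
    refine ⟨(m - v / d, v / d), by simp [hle], Prod.ext ?_ hv'.symm⟩
    have := Nat.mul_sub d m (v / d)
    have := Nat.mul_le_mul_left d hle
    simp only at huv ⊢
    omega

lemma sum_divisorsAntidiagonal_mul_filter_dvd {M : Type*} [AddCommMonoid M] {d : ℕ} (hd : 0 < d)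
    (n : ℕ) (f : ℕ × ℕ → M) :
    ∑ q ∈ (d * n).divisorsAntidiagonal with d ∣ q.2, f q =
      ∑ q ∈ n.divisorsAntidiagonal, f (q.1, d * q.2) := by
  symm
  refine sum_nbij (fun q => (q.1, d * q.2)) ?_ ?_ ?_ fun _ _ => rfl
  · rintro ⟨a, e⟩ h
    simp only [mem_filter, Nat.mem_divisorsAntidiagonal, dvd_mul_right, and_true] at h ⊢
    exact ⟨by rw [← h.1]; ring, mul_ne_zero hd.ne' h.2⟩
  · rintro ⟨a, e⟩ - ⟨a', e'⟩ -
    simp [hd.ne']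
  · rintro ⟨a, e⟩ h
    simp only [coe_filter, Set.mem_ofPred_eq, Nat.mem_divisorsAntidiagonal] at h
    obtain ⟨⟨hmul, hne⟩, f, rfl⟩ := h
    refine ⟨(a, f), ?_, rfl⟩
    rw [mul_left_comm] at hmul
    simpa using ⟨Nat.eq_of_mul_eq_mul_left hd hmul, right_ne_zero_of_mul hne⟩

lemma card_filter_mod_eq {r m : ℕ} (hr : 0 < r) (hrm : r < m) (e : ℕ) :
    #{x ∈ Ioo 0 e | x % m = r} = e / m + if r < e % m then 1 else 0 := by
  have : {x ∈ Ioo 0 e | x % m = r} = {x ∈ range e | x ≡ r [MOD m]} := by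
    ext x
    simp only [mem_filter, mem_Ioo, mem_range, Nat.ModEq, Nat.mod_eq_of_lt hrm]
    refine ⟨fun h => ⟨h.1.2, h.2⟩, fun h => ⟨⟨Nat.pos_of_ne_zero ?_, h.1⟩, h.2⟩⟩
    rintro rfl
    exact hr.ne (Nat.zero_mod m ▸ h.2)
  rw [this, ← Nat.count_eq_card_filter_range, Nat.count_modEq_card e (by omega),
    Nat.mod_eq_of_lt hrm]

lemma mul_mod_three_eq_one_iff (m n : ℕ) : m * n % 3 = 1 ↔ m % 3 = n % 3 ∧ m % 3 ≠ 0 := by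
  have residues : ∀ r < 3, ∀ s < 3, r * s % 3 = 1 ↔ r = s ∧ r ≠ 0 := by decide
  rw [Nat.mul_mod]
  exact residues _ (Nat.mod_lt m three_pos) _ (Nat.mod_lt n three_pos)

lemma mul_mod_three_eq_two_iff (m n : ℕ) : m * n % 3 = 2 ↔ (m + n) % 3 = 0 ∧ m % 3 ≠ 0 := by
  have residues : ∀ r < 3, ∀ s < 3, r * s % 3 = 2 ↔ (r + s) % 3 = 0 ∧ r ≠ 0 := by decide
  rw [Nat.mul_mod, Nat.add_mod]
  exact residues _ (Nat.mod_lt m three_pos) _ (Nat.mod_lt n three_pos)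

lemma sum_chi_of_mod_eq (n : ℕ) :
    ∑ q ∈ n.divisorsAntidiagonal, (if q.1 % 3 = q.2 % 3 then chi q.1 else 0) =
      if n % 3 = 1 then chiZeta n else 0 := by
  rw [chiZeta_apply, ← Nat.sum_divisorsAntidiagonal fun d _ => chi d, ite_sum_zero]
  refine sum_congr rfl fun ⟨a, x⟩ hq => ?_
  obtain ⟨rfl, -⟩ := Nat.mem_divisorsAntidiagonal.1 hq
  simp only [mul_mod_three_eq_one_iff, chi_apply]
  split_ifs <;> omega

lemma three_mul_sum_allEqual {a e : ℕ} (h : a * e % 3 = 2) :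
    3 * ∑ x ∈ Ioo 0 e, allEqual a a x (e - x) = e + chi a := by
  obtain ⟨hae, ha⟩ := (mul_mod_three_eq_two_iff a e).1 h
  have indicator (x : ℕ) (hx : x ∈ Ioo 0 e) :
      allEqual a a x (e - x) = if x % 3 = a % 3 then 1 else 0 := by
    rw [mem_Ioo] at hx
    unfold allEqual
    split_ifs <;> omega
  rw [sum_congr rfl indicator, sum_boole,
    card_filter_mod_eq (by omega) (Nat.mod_lt a three_pos), chi_apply]
  split_ifs <;> omega

theorem three_mul_sum_chiZeta_mul_chiZeta (m : ℕ) :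
    3 * ∑ q ∈ antidiagonal m, chiZeta (3 * q.1 + 1) * chiZeta (3 * q.2 + 1) =
      (σ 1 (3 * m + 2) : ℤ) := by
  have product : quadSum (3 * m + 2)
      (fun a b x y => if a % 3 = x % 3 ∧ b % 3 = y % 3 then chi a * chi b else 0) =
        ∑ q ∈ antidiagonal m, chiZeta (3 * q.1 + 1) * chiZeta (3 * q.2 + 1) := by
    simp only [← ite_zero_mul_ite_zero]
    rw [quadSum_mul (3 * m + 2) (fun a x => if a % 3 = x % 3 then chi a else 0)
        (fun b y => if b % 3 = y % 3 then chi b else 0)]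
    simp only [sum_chi_of_mod_eq]
    rw [sum_antidiagonal_eq_sum_residue (d := 3) (r := 1) (s := 1) (by norm_num) m
      fun q hq => by rw [if_neg hq, mul_zero]]
    simp
  rw [← product, quadSum_chi_mul_chi, quadSum_diagonal, mul_sum]
  calc
    _ = ∑ q ∈ (3 * m + 2).divisorsAntidiagonal, ((q.2 : ℤ) + chi q.1) := by
      refine sum_congr rfl fun ⟨a, e⟩ hq => three_mul_sum_allEqual ?_
      rw [(Nat.mem_divisorsAntidiagonal.1 hq).1, Nat.mul_add_mod]
    _ = (σ 1 (3 * m + 2) : ℤ) + chiZeta (3 * m + 2) := by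
      rw [sum_add_distrib, Nat.sum_divisorsAntidiagonal' fun _ e => (e : ℤ),
        Nat.sum_divisorsAntidiagonal fun d _ => chi d, sigma_one_apply, Nat.cast_sum, chiZeta_apply]
    _ = _ := by rw [chiZeta_eq_zero_of_mod_eq_two (Nat.mul_add_mod ..), add_zero]

lemma chi_of_mod_eq_eq_sign_sub_sign {a b x y : ℕ} (h : (a * x + b * y) % 3 = 0) :
    (if b % 3 = y % 3 then chi b else 0) =
      signLastOpposite b a y x - signFirstOpposite a b x y := by
  have opposite (hby : b % 3 = y % 3) (hb : b % 3 ≠ 0) : (a + x) % 3 = 0 ∧ a % 3 ≠ 0 := by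
    have hmul := (mul_mod_three_eq_one_iff b y).2 ⟨hby, hb⟩
    exact (mul_mod_three_eq_two_iff a x).1 (by omega)
  simp only [signLastOpposite, signFirstOpposite, chi_apply]
  split_ifs <;> omega

lemma quadSum_mul_chi {N : ℕ} (hN : N % 3 = 0) :
    quadSum N (fun a b _ y => (a : ℤ) * if b % 3 = y % 3 then chi b else 0) =
      quadSum N (fun a b x y => if a = b then signLastOpposite a b x y * (x + y) else 0) := by
  rw [← quadSum_signLastOpposite_sub_signFirstOpposite,
    quadSum_swap fun a b x y => signLastOpposite a b x y * b, ← quadSum_sub]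
  refine quadSum_congr fun a b x y _ _ _ _ h => ?_
  rw [chi_of_mod_eq_eq_sign_sub_sign (h ▸ hN)]
  ring

lemma three_mul_sum_signLastOpposite (a e : ℕ) :
    3 * ∑ x ∈ Ioo 0 e, signLastOpposite a a x (e - x) = if 3 ∣ e then chi a * e else 0 := by
  have indicator (x : ℕ) (hx : x ∈ Ioo 0 e) :
      signLastOpposite a a x (e - x) = if x % 3 = a % 3 ∧ 3 ∣ e then chi a else 0 := by
    rw [mem_Ioo] at hx
    exact if_congr (by omega) rfl rfl
  rw [sum_congr rfl indicator]
  by_cases ha : a % 3 = 0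
  · simp [chi_apply, ha]
  by_cases he : 3 ∣ e
  · have card : #{x ∈ Ioo 0 e | x % 3 = a % 3} = e / 3 := by
      rw [card_filter_mod_eq (Nat.pos_of_ne_zero ha) (Nat.mod_lt a three_pos), if_neg (by omega),
        add_zero]
    simp only [he, and_true, if_true]
    rw [← sum_filter, sum_const, card, nsmul_eq_mul]
    have hdiv : (3 : ℤ) * (e / 3 : ℕ) = e := mod_cast Nat.mul_div_cancel' he
    linear_combination chi a * hdiv
  · simp [he]

theorem sum_sigma_mul_chiZeta (m : ℕ) :
    ∑ q ∈ antidiagonal m, (σ 1 (3 * q.1 + 2) : ℤ) * chiZeta (3 * q.2 + 1) =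
      3 * chiPowTwo (m + 1) := by
  have product : quadSum (3 * (m + 1))
      (fun a b _ y => (a : ℤ) * if b % 3 = y % 3 then chi b else 0) =
        ∑ q ∈ antidiagonal m, (σ 1 (3 * q.1 + 2) : ℤ) * chiZeta (3 * q.2 + 1) := by
    rw [quadSum_mul _ (fun a _ => (a : ℤ)) (fun b y => if b % 3 = y % 3 then chi b else 0)]
    simp only [sum_chi_of_mod_eq, Nat.sum_divisorsAntidiagonal fun d _ => (d : ℤ)]
    rw [mul_add_one, ← add_assoc _ 2 1, sum_antidiagonal_eq_sum_residue (d := 3) (by norm_num) m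
      fun q hq => by rw [if_neg hq, mul_zero]]
    simp [sigma_one_apply]
  rw [← product, quadSum_mul_chi (Nat.mul_mod_right ..), quadSum_diagonal]
  refine mul_left_cancel₀ (three_ne_zero (α := ℤ)) ?_
  rw [mul_sum]
  calc
    _ = ∑ q ∈ (3 * (m + 1)).divisorsAntidiagonal,
        if 3 ∣ q.2 then chi q.1 * (q.2 : ℤ) ^ 2 else 0 := by
      refine sum_congr rfl fun ⟨a, e⟩ _ => ?_
      have (x : ℕ) (hx : x ∈ Ioo 0 e) : signLastOpposite a a x (e - x) * ((x : ℤ) + ↑(e - x)) =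
          signLastOpposite a a x (e - x) * e := by
        rw [← Nat.cast_add, Nat.add_sub_cancel' (mem_Ioo.1 hx).2.le]
      rw [sum_congr rfl this, ← sum_mul, ← mul_assoc, three_mul_sum_signLastOpposite, ite_mul,
        zero_mul, mul_assoc, sq]
    _ = 3 * (3 * chiPowTwo (m + 1)) := by
      rw [← sum_filter, sum_divisorsAntidiagonal_mul_filter_dvd three_pos, chiPowTwo_apply,
        mul_sum, mul_sum]
      refine sum_congr rfl fun q _ => ?_
      push_cast
      ring

/-! ### Eisenstein integers -/

/-- The ring `ℤ[ω]` of Eisenstein integers `x + y ω`, where `ω² = -1 - ω`. -/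
abbrev EisensteinInt : Type := QuadraticAlgebra ℤ (-1) (-1)

namespace EisensteinInt

lemma norm_eq (z : EisensteinInt) : z.norm = z.re ^ 2 - z.re * z.im + z.im ^ 2 := by
  rw [QuadraticAlgebra.norm_def]; ring

lemma norm_nonneg (z : EisensteinInt) : 0 ≤ z.norm := by
  rw [norm_eq]; nlinarith [sq_nonneg (2 * z.re - z.im), sq_nonneg z.im]

lemma norm_eq_zero_iff {z : EisensteinInt} : z.norm = 0 ↔ z = 0 := by
  refine ⟨fun h => ?_, fun h => h ▸ QuadraticAlgebra.norm_zero⟩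
  rw [norm_eq] at h
  have him : z.im ^ 2 = 0 := by nlinarith [sq_nonneg (2 * z.re - z.im), sq_nonneg z.im]
  have hre : z.re ^ 2 = 0 := by nlinarith [sq_nonneg (2 * z.im - z.re), sq_nonneg z.re]
  exact QuadraticAlgebra.ext (pow_eq_zero_iff two_ne_zero |>.1 hre)
    (pow_eq_zero_iff two_ne_zero |>.1 him)

lemma norm_pos {z : EisensteinInt} (hz : z ≠ 0) : 0 < z.norm :=
  (norm_nonneg z).lt_of_ne' (norm_eq_zero_iff.not.2 hz)

lemma isUnit_iff_norm_eq_one {z : EisensteinInt} : IsUnit z ↔ z.norm = 1 := by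
  rw [QuadraticAlgebra.isUnit_iff_norm_isUnit, Int.isUnit_iff]
  have := norm_nonneg z
  omega

lemma mul_star_self (z : EisensteinInt) : z * star z = (z.norm : EisensteinInt) :=
  (QuadraticAlgebra.algebraMap_norm_eq_mul_star z).symm

lemma intCast_dvd_iff {n : ℤ} {z : EisensteinInt} :
    (n : EisensteinInt) ∣ z ↔ n ∣ z.re ∧ n ∣ z.im :=
  QuadraticAlgebra.algebraMap_dvd_iff

/-- The quotient `z / w = z w̄ / N(w)`, with both coordinates rounded to nearest integers. -/
def quotient (z w : EisensteinInt) : EisensteinInt :=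
  ⟨(z * star w).re.bdiv w.norm.natAbs, (z * star w).im.bdiv w.norm.natAbs⟩

lemma sub_mul_quotient_mul_star (z w : EisensteinInt) :
    (z - w * quotient z w) * star w =
      ⟨(z * star w).re.bmod w.norm.natAbs, (z * star w).im.bmod w.norm.natAbs⟩ := by
  have hN : (w.norm.natAbs : ℤ) = w.norm := Int.natAbs_of_nonneg (norm_nonneg w)
  have hexpand : (z - w * quotient z w) * star w =
      z * star w - (w.norm : EisensteinInt) * quotient z w := by
    rw [← mul_star_self]; ring
  rw [hexpand]
  ext <;> simp [quotient, Int.bmod_eq_self_sub_mul_bdiv, hN]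

lemma two_mul_abs_bmod_le (x : ℤ) {m : ℕ} (hm : 0 < m) : 2 * |x.bmod m| ≤ m := by
  have hlow := Int.le_bmod (x := x) hm
  have hupp := Int.bmod_lt (x := x) hm
  rcases abs_cases (x.bmod m) with ⟨habs, -⟩ | ⟨habs, -⟩ <;> omega

lemma norm_sub_mul_quotient_lt (z : EisensteinInt) {w : EisensteinInt} (hw : w ≠ 0) :
    (z - w * quotient z w).norm < w.norm := by
  have hN := norm_pos hw
  have hcast : (w.norm.natAbs : ℤ) = w.norm := Int.natAbs_of_nonneg hN.le
  have hre := two_mul_abs_bmod_le (z * star w).re (Int.natAbs_pos.2 hN.ne')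
  have him := two_mul_abs_bmod_le (z * star w).im (Int.natAbs_pos.2 hN.ne')
  rw [hcast] at hre him
  set e := (z * star w).re.bmod w.norm.natAbs
  set f := (z * star w).im.bmod w.norm.natAbs
  have hnorm : (z - w * quotient z w).norm * w.norm = e ^ 2 - e * f + f ^ 2 := by
    rw [← QuadraticAlgebra.norm_star w, ← map_mul, sub_mul_quotient_mul_star, norm_eq]
  refine lt_of_mul_lt_mul_right (hnorm.trans_lt ?_) hN.le
  have hef : -(|e| * |f|) ≤ e * f := by rw [← abs_mul]; exact neg_abs_le _
  nlinarith [sq_abs e, sq_abs f, abs_nonneg e, abs_nonneg f]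

noncomputable instance : EuclideanDomain EisensteinInt where
  quotient := quotient
  quotient_zero z := by
    ext <;> simp [quotient, Int.bdiv]
  remainder z w := z - w * quotient z w
  quotient_mul_add_remainder_eq z w := by ring
  r z w := z.norm.natAbs < w.norm.natAbs
  r_wellFounded := (measure fun z : EisensteinInt => z.norm.natAbs).wf
  remainder_lt z w hw :=
    Int.natAbs_lt_natAbs_of_nonneg_of_lt (norm_nonneg _) (norm_sub_mul_quotient_lt z hw)
  mul_left_not_lt z w hw := by
    rw [map_mul, Int.natAbs_mul, not_lt]
    exact Nat.le_mul_of_pos_right _ (Int.natAbs_pos.2 (norm_pos hw).ne')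

lemma irreducible_of_prime_norm {z : EisensteinInt} (hz : Prime z.norm) : Irreducible z where
  not_isUnit hu := hz.not_isUnit (hu.map QuadraticAlgebra.norm)
  isUnit_or_isUnit u v huv := by
    rw [huv, map_mul] at hz
    exact (hz.irreducible.isUnit_or_isUnit rfl).imp
      QuadraticAlgebra.isUnit_iff_norm_isUnit.2 QuadraticAlgebra.isUnit_iff_norm_isUnit.2

lemma prime_natCast_of_forall_norm_ne {p : ℕ} (hp : p.Prime)
    (hnorm : ∀ z : EisensteinInt, z.norm ≠ p) : Prime (p : EisensteinInt) := by
  refine Irreducible.prime ⟨fun hu => ?_, fun u v huv => ?_⟩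
  · rw [isUnit_iff_norm_eq_one, QuadraticAlgebra.norm_natCast] at hu
    exact hp.one_lt.ne' ((Nat.pow_eq_one.1 (by exact_mod_cast hu)).resolve_right two_ne_zero)
  · by_contra! hnot
    have hnatAbs_ne (z : EisensteinInt) (hz : ¬IsUnit z) : z.norm.natAbs ≠ 1 := fun h =>
      hz (isUnit_iff_norm_eq_one.2 (by have := norm_nonneg z; omega))
    have hmul : u.norm.natAbs * v.norm.natAbs = p ^ 2 := by
      rw [← Int.natAbs_mul, ← map_mul, ← huv, QuadraticAlgebra.norm_natCast, Int.natAbs_pow,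
        Int.natAbs_natCast]
    have hu := ((hp.mul_eq_prime_sq_iff (hnatAbs_ne u hnot.1) (hnatAbs_ne v hnot.2)).1 hmul).1
    exact hnorm u (by have := norm_nonneg u; omega)

lemma norm_mod_three_ne_two (z : EisensteinInt) : z.norm % 3 ≠ 2 := by
  have hsq : 4 * z.norm = (2 * z.re - z.im) ^ 2 + 3 * z.im ^ 2 := by rw [norm_eq]; ring
  have hmod : (2 * z.re - z.im) ^ 2 % 3 = 0 ∨ (2 * z.re - z.im) ^ 2 % 3 = 1 := by
    rw [pow_two, Int.mul_emod]
    obtain h | h | h : (2 * z.re - z.im) % 3 = 0 ∨ (2 * z.re - z.im) % 3 = 1 ∨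
      (2 * z.re - z.im) % 3 = 2 := by omega
    all_goals simp [h]
  omega

lemma prime_natCast_of_mod_eq_two {p : ℕ} (hp : p.Prime) (hp3 : p % 3 = 2) :
    Prime (p : EisensteinInt) :=
  prime_natCast_of_forall_norm_ne hp fun z hz => norm_mod_three_ne_two z (by omega)

lemma exists_sq_sub_add_one_eq_zero {p : ℕ} [Fact p.Prime] (hp3 : p % 3 = 1) :
    ∃ t : ZMod p, t ^ 2 - t + 1 = 0 := by
  have hcard : 3 ∣ Fintype.card (ZMod p)ˣ := by rw [ZMod.card_units]; omega
  obtain ⟨g, hg⟩ := exists_prime_orderOf_dvd_card 3 hcard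
  have hg_cube : (g : ZMod p) ^ 3 = 1 := by
    rw [← Units.val_pow_eq_pow_val, ← hg, pow_orderOf_eq_one, Units.val_one]
  have hg_ne : (g : ZMod p) - 1 ≠ 0 := fun h => by
    have hg_one : g = 1 := Units.ext (sub_eq_zero.1 h)
    rw [hg_one, orderOf_one] at hg
    omega
  refine ⟨-g, (mul_eq_zero.1 ?_).resolve_left hg_ne⟩
  linear_combination hg_cube

lemma exists_norm_eq_of_mod_eq_one {p : ℕ} (hp : p.Prime) (hp3 : p % 3 = 1) :
    ∃ z : EisensteinInt, z.norm = p := by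
  have : Fact p.Prime := ⟨hp⟩
  by_contra! hnorm
  have hprime := prime_natCast_of_forall_norm_ne hp hnorm
  obtain ⟨s, hs⟩ := exists_sq_sub_add_one_eq_zero hp3
  obtain ⟨t, rfl⟩ := ZMod.intCast_surjective s
  have hdvd : (p : EisensteinInt) ∣ ⟨t, 1⟩ * star ⟨t, 1⟩ := by
    rw [mul_star_self, norm_eq, ← Int.cast_natCast (R := EisensteinInt), intCast_dvd_iff,
      QuadraticAlgebra.re_intCast, QuadraticAlgebra.im_intCast]
    refine ⟨?_, dvd_zero _⟩
    rw [← ZMod.intCast_zmod_eq_zero_iff_dvd]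
    simpa using hs
  have him : (p : ℤ) ∣ 1 := by
    rcases hprime.dvd_or_dvd hdvd with h | h <;>
      rw [← Int.cast_natCast (R := EisensteinInt), intCast_dvd_iff] at h <;> simpa using h.2
  exact hp.one_lt.ne' (by exact_mod_cast Int.eq_one_of_dvd_one (by positivity) him)

lemma natCast_dvd_of_dvd_mul_self {p : ℕ} (hp : p.Prime) (hp3 : p ≠ 3) {z : EisensteinInt}
    (h : (p : EisensteinInt) ∣ z * z) : (p : EisensteinInt) ∣ z := by
  have hpZ : Prime (p : ℤ) := Nat.prime_iff_prime_int.1 hp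
  rw [← Int.cast_natCast (R := EisensteinInt), intCast_dvd_iff] at h ⊢
  have hre : (p : ℤ) ∣ z.re ^ 2 - z.im ^ 2 := by
    have hz : (z * z).re = z.re ^ 2 - z.im ^ 2 := by rw [QuadraticAlgebra.re_mul]; ring
    exact hz ▸ h.1
  have him : (p : ℤ) ∣ z.im * (2 * z.re - z.im) := by
    have hz : (z * z).im = z.im * (2 * z.re - z.im) := by rw [QuadraticAlgebra.im_mul]; ring
    exact hz ▸ h.2
  rcases hpZ.dvd_or_dvd him with hdvd | hdvd
  · refine ⟨hpZ.dvd_of_dvd_pow (n := 2) ?_, hdvd⟩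
    exact (dvd_sub_left (hdvd.pow two_ne_zero)).1 hre
  · have h3re : (p : ℤ) ∣ 3 * z.re ^ 2 := by
      rw [show 3 * z.re ^ 2 =
        (2 * z.re - z.im) * (2 * z.re + z.im) - (z.re ^ 2 - z.im ^ 2) by ring]
      exact (hdvd.mul_right _).sub hre
    have hp_not_dvd_three : ¬(p : ℤ) ∣ 3 := fun h3 =>
      hp3 ((Nat.prime_dvd_prime_iff_eq hp Nat.prime_three).1 (by exact_mod_cast h3))
    have hre' := hpZ.dvd_of_dvd_pow ((hpZ.dvd_or_dvd h3re).resolve_left hp_not_dvd_three)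
    exact ⟨hre', (dvd_sub_right (hre'.mul_left 2)).1 hdvd⟩

lemma not_star_dvd_self {p : ℕ} (hp : p.Prime) (hp3 : p ≠ 3) {π : EisensteinInt}
    (hπ : π.norm = p) : ¬star π ∣ π := fun h => by
  have hdvd : (p : EisensteinInt) ∣ π := by
    refine natCast_dvd_of_dvd_mul_self hp hp3 ?_
    rw [← Int.cast_natCast (R := EisensteinInt), ← hπ, ← mul_star_self]
    exact mul_dvd_mul_left π h
  have hsq : (p : ℤ) ^ 2 ∣ p := by
    rw [← QuadraticAlgebra.norm_natCast (R := ℤ) (a := -1) (b := -1), ← hπ]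
    exact map_dvd QuadraticAlgebra.norm hdvd
  have := Nat.le_of_dvd hp.pos (by exact_mod_cast hsq)
  nlinarith [hp.two_le]

lemma dvd_or_star_dvd_of_norm_dvd_norm {π z : EisensteinInt} (hπ : Prime π.norm)
    (h : π.norm ∣ z.norm) : π ∣ z ∨ star π ∣ z := by
  have hdvd : π ∣ z * star z := by
    rw [mul_star_self]
    refine Dvd.dvd.trans ?_ (Int.cast_dvd_cast _ _ h)
    rw [← mul_star_self]
    exact dvd_mul_right π (star π)
  refine ((irreducible_of_prime_norm hπ).prime.dvd_or_dvd hdvd).imp_right ?_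
  rintro ⟨u, hu⟩
  exact ⟨star u, by rw [← star_mul', ← hu, star_star]⟩

lemma dvd_and_star_dvd_iff {p : ℕ} (hp : p.Prime) (hp3 : p ≠ 3) {π z : EisensteinInt}
    (hπ : π.norm = p) : π ∣ z ∧ star π ∣ z ↔ (p : EisensteinInt) ∣ z := by
  have hmul : (p : EisensteinInt) = π * star π := by rw [mul_star_self, hπ, Int.cast_natCast]
  rw [hmul]
  refine ⟨?_, fun h => ⟨(dvd_mul_right ..).trans h, (dvd_mul_left ..).trans h⟩⟩
  rintro ⟨⟨u, rfl⟩, hstar⟩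
  have hprime : Prime (star π) := (irreducible_of_prime_norm (by
    rw [QuadraticAlgebra.norm_star, hπ]; exact Nat.prime_iff_prime_int.1 hp)).prime
  exact mul_dvd_mul_left π
    ((hprime.dvd_or_dvd hstar).resolve_left (not_star_dvd_self hp hp3 hπ))

lemma natCast_dvd_of_dvd_norm {p : ℕ} (hp : p.Prime) (hp3 : p % 3 = 2) {z : EisensteinInt}
    (h : (p : ℤ) ∣ z.norm) : (p : EisensteinInt) ∣ z := by
  have hdvd : (p : EisensteinInt) ∣ z * star z := by
    rw [mul_star_self, ← Int.cast_natCast (R := EisensteinInt)]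
    exact Int.cast_dvd_cast _ _ h
  rcases (prime_natCast_of_mod_eq_two hp hp3).dvd_or_dvd hdvd with hz | ⟨u, hu⟩
  · exact hz
  · exact ⟨star u, by rw [← star_star z, hu, star_mul', star_natCast]⟩

lemma one_sub_omega_dvd_of_three_dvd_norm {z : EisensteinInt} (h : 3 ∣ z.norm) :
    (⟨1, -1⟩ : EisensteinInt) ∣ z := by
  have hnorm : (⟨1, -1⟩ : EisensteinInt).norm = 3 := by rw [norm_eq]; norm_num
  rcases dvd_or_star_dvd_of_norm_dvd_norm (π := ⟨1, -1⟩) (z := z)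
    (by rw [hnorm]; exact Int.prime_three) (by rwa [hnorm]) with hz | hz
  · exact hz
  · refine Dvd.dvd.trans ⟨⟨1, 1⟩, ?_⟩ hz
    ext <;> simp

lemma finite_setOf_norm_eq (n : ℤ) : {z : EisensteinInt | z.norm = n}.Finite := by
  refine Set.Finite.of_finite_image (f := QuadraticAlgebra.equivProd _ _)
    ((Set.finite_Icc (-(2 * n)) (2 * n)).prod (Set.finite_Icc (-(2 * n)) (2 * n)) |>.subset ?_)
    (Equiv.injective _).injOn
  rintro _ ⟨z, hz, rfl⟩
  have hnorm : z.re ^ 2 - z.re * z.im + z.im ^ 2 = n := (norm_eq z).symm.trans hz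
  have hre : z.re ^ 2 ≤ 2 * n := by
    nlinarith [sq_nonneg (2 * z.im - z.re), sq_nonneg z.re]
  have him : z.im ^ 2 ≤ 2 * n := by
    nlinarith [sq_nonneg (2 * z.re - z.im), sq_nonneg z.im]
  have hle (x : ℤ) (hx : x ^ 2 ≤ 2 * n) : x ∈ Set.Icc (-(2 * n)) (2 * n) :=
    ⟨by linarith [Int.le_self_sq (-x), neg_sq x], (Int.le_self_sq x).trans hx⟩
  exact ⟨hle _ hre, hle _ him⟩

/-- The number of Eisenstein integers of norm `n`. -/
noncomputable def normCount (n : ℤ) : ℕ := {z : EisensteinInt | z.norm = n}.ncard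

lemma ncard_norm_eq_mul_and_dvd {w : EisensteinInt} (hw : w ≠ 0) (n : ℤ) :
    {z : EisensteinInt | z.norm = w.norm * n ∧ w ∣ z}.ncard = normCount n := by
  rw [normCount, ← Set.ncard_image_of_injective {z : EisensteinInt | z.norm = n}
    (mul_right_injective₀ hw)]
  congr 1
  ext z
  constructor
  · rintro ⟨hz, u, rfl⟩
    rw [map_mul] at hz
    exact ⟨u, mul_left_cancel₀ (norm_pos hw).ne' hz, rfl⟩
  · rintro ⟨u, hu, rfl⟩
    exact ⟨by rw [map_mul, hu], dvd_mul_right w u⟩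

lemma normCount_three_mul (n : ℤ) : normCount (3 * n) = normCount n := by
  have hnorm : (⟨1, -1⟩ : EisensteinInt).norm = 3 := by rw [norm_eq]; norm_num
  have hne : (⟨1, -1⟩ : EisensteinInt) ≠ 0 := fun h => by simp [h] at hnorm
  rw [← ncard_norm_eq_mul_and_dvd hne n, hnorm, normCount]
  congr 1
  ext z
  exact ⟨fun hz => ⟨hz, one_sub_omega_dvd_of_three_dvd_norm ⟨n, hz⟩⟩, And.left⟩

lemma normCount_prime_mul_of_mod_eq_two {p : ℕ} (hp : p.Prime) (hp3 : p % 3 = 2) (n : ℤ) :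
    normCount (p * n) = {z : EisensteinInt | z.norm = p * n ∧ (p : EisensteinInt) ∣ z}.ncard := by
  rw [normCount]
  congr 1
  ext z
  exact ⟨fun hz => ⟨hz, natCast_dvd_of_dvd_norm hp hp3 ⟨n, hz⟩⟩, And.left⟩

lemma normCount_prime_mul_add_of_mod_eq_one {p : ℕ} (hp : p.Prime) (hp3 : p % 3 = 1) (n : ℤ) :
    normCount (p * n) + {z : EisensteinInt | z.norm = p * n ∧ (p : EisensteinInt) ∣ z}.ncard =
      2 * normCount n := by
  obtain ⟨π, hπ⟩ := exists_norm_eq_of_mod_eq_one hp hp3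
  have hπprime : Prime π.norm := hπ ▸ Nat.prime_iff_prime_int.1 hp
  have hπne : π ≠ 0 := fun h => hπprime.ne_zero (by rw [h, QuadraticAlgebra.norm_zero])
  let S (w : EisensteinInt) : Set EisensteinInt := {z | z.norm = p * n ∧ w ∣ z}
  have hfin (w : EisensteinInt) : (S w).Finite :=
    (finite_setOf_norm_eq (p * n)).subset fun _ => And.left
  have hunion : S π ∪ S (star π) = {z | z.norm = p * n} := by
    ext z
    simp only [S, ← Set.ofPred_or, ← and_or_left]
    exact ⟨And.left, fun hz => ⟨hz, dvd_or_star_dvd_of_norm_dvd_norm hπprime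
      (by rw [hπ]; exact ⟨n, hz⟩)⟩⟩
  have hinter : S π ∩ S (star π) = S p := by
    ext z
    simp only [S, ← Set.ofPred_and, ← and_and_left, dvd_and_star_dvd_iff hp (by omega) hπ]
  have hcard {w : EisensteinInt} (hw : w ≠ 0) (hnorm : w.norm = p) :
      (S w).ncard = normCount n := by
    rw [← ncard_norm_eq_mul_and_dvd hw, hnorm]
  change {z : EisensteinInt | z.norm = p * n}.ncard + (S p).ncard = _
  rw [← hunion, ← hinter, Set.ncard_union_add_ncard_inter _ _ (hfin _) (hfin _),
    hcard hπne hπ, hcard (star_ne_zero.2 hπne) ((QuadraticAlgebra.norm_star π).trans hπ), two_mul]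

lemma normCount_prime_mul {p : ℕ} (hp : p.Prime) (n : ℤ) :
    (normCount (p * n) : ℤ) = (1 + chi p) * normCount n -
      chi p * {z : EisensteinInt | z.norm = p * n ∧ (p : EisensteinInt) ∣ z}.ncard := by
  obtain h | h | h : p % 3 = 0 ∨ p % 3 = 1 ∨ p % 3 = 2 := by omega
  · obtain rfl : 3 = p :=
      (Nat.prime_dvd_prime_iff_eq Nat.prime_three hp).1 (Nat.dvd_of_mod_eq_zero h)
    simp [chi_apply, normCount_three_mul]
  · have := normCount_prime_mul_add_of_mod_eq_one hp h n
    simp only [chi_apply, h, if_true]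
    omega
  · have := normCount_prime_mul_of_mod_eq_two hp h n
    simp [chi_apply, h, this]

lemma ncard_norm_eq_prime_mul_and_dvd_of_not_dvd {p : ℕ} (hp : p.Prime) {n : ℤ}
    (hn : ¬(p : ℤ) ∣ n) :
    {z : EisensteinInt | z.norm = p * n ∧ (p : EisensteinInt) ∣ z}.ncard = 0 := by
  suffices {z : EisensteinInt | z.norm = p * n ∧ (p : EisensteinInt) ∣ z} = ∅ by
    rw [this, Set.ncard_empty]
  refine Set.eq_empty_of_forall_notMem ?_
  rintro _ ⟨hz, u, rfl⟩
  rw [map_mul, QuadraticAlgebra.norm_natCast, pow_two, mul_assoc] at hz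
  exact hn ⟨u.norm, (mul_left_cancel₀ (by exact_mod_cast hp.ne_zero) hz).symm⟩

lemma ncard_norm_eq_prime_mul_prime_mul_and_dvd {p : ℕ} (hp : p.Prime) (n : ℤ) :
    {z : EisensteinInt | z.norm = p * (p * n) ∧ (p : EisensteinInt) ∣ z}.ncard = normCount n := by
  rw [← ncard_norm_eq_mul_and_dvd (w := p) (by exact_mod_cast hp.ne_zero),
    QuadraticAlgebra.norm_natCast, pow_two, mul_assoc]

lemma normCount_prime_pow_mul {p : ℕ} (hp : p.Prime) {n : ℤ} (hn : ¬(p : ℤ) ∣ n) (k : ℕ) :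
    (normCount (p ^ k * n) : ℤ) = chiZeta (p ^ k) * normCount n := by
  induction k using Nat.twoStepInduction with
  | zero => simp [isMultiplicative_chiZeta.map_one]
  | one =>
    rw [pow_one, normCount_prime_mul hp, ncard_norm_eq_prime_mul_and_dvd_of_not_dvd hp hn,
      chiZeta_prime_pow hp]
    simp [sum_range_succ]
  | more k ih ih' =>
    have hstep := normCount_prime_mul hp (p * (p ^ k * n))
    rw [ncard_norm_eq_prime_mul_prime_mul_and_dvd hp, ih, ← mul_assoc (p : ℤ) (p ^ k),
      ← pow_succ', ih', ← mul_assoc, ← pow_succ', chiZeta_prime_pow hp] at hstep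
    rw [hstep, chiZeta_prime_pow hp, chiZeta_prime_pow hp, sum_range_succ _ (k + 2),
      sum_range_succ _ (k + 1)]
    ring

lemma setOf_norm_eq_one : {z : EisensteinInt | z.norm = 1} =
    ({⟨1, 0⟩, ⟨1, 1⟩, ⟨0, 1⟩, ⟨-1, 0⟩, ⟨-1, -1⟩, ⟨0, -1⟩} : Finset EisensteinInt) := by
  ext ⟨x, y⟩
  simp only [Set.mem_ofPred_eq, norm_eq, coe_insert, coe_singleton, Set.mem_insert_iff,
    Set.mem_singleton_iff, QuadraticAlgebra.mk.injEq]
  refine ⟨fun h => ?_, by rintro (h | h | h | h | h | h) <;> simp [h.1, h.2]⟩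
  have hx : x ^ 2 < 2 ^ 2 := by nlinarith [sq_nonneg (2 * y - x)]
  have hy : y ^ 2 < 2 ^ 2 := by nlinarith [sq_nonneg (2 * x - y)]
  obtain ⟨hx1, hx2⟩ := abs_lt_of_sq_lt_sq' hx zero_le_two
  obtain ⟨hy1, hy2⟩ := abs_lt_of_sq_lt_sq' hy zero_le_two
  interval_cases x <;> interval_cases y <;> simp at h ⊢

lemma normCount_one : normCount 1 = 6 := by
  rw [normCount, setOf_norm_eq_one, Set.ncard_coe_finset]
  rfl

theorem normCount_eq {n : ℕ} (hn : n ≠ 0) : (normCount n : ℤ) = 6 * chiZeta n := by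
  induction n using Nat.recOnPrimePow with
  | zero => exact absurd rfl hn
  | one => simp [normCount_one, isMultiplicative_chiZeta.map_one]
  | prime_pow_mul a p k hp hpa _ ih =>
    have ha : a ≠ 0 := right_ne_zero_of_mul hn
    have hcop : (p ^ k).Coprime a := ((hp.coprime_iff_not_dvd).2 hpa).pow_left k
    rw [Nat.cast_mul, Nat.cast_pow, normCount_prime_pow_mul hp (by exact_mod_cast hpa), ih ha,
      isMultiplicative_chiZeta.map_mul_of_coprime hcop]
    ring

/-- A fundamental domain for multiplication by the six units on the elements of norm `≡ 3 mod 9`: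
the condition modulo 3 eliminates the sign, the positivity conditions the powers of `ω`. -/
def InSector (z : EisensteinInt) : Prop :=
  z.re % 3 = 1 ∧ 0 < z.re ∧ 0 < z.im

lemma inSector_mk_mul_iff {x y : ℤ} {z : EisensteinInt} : InSector (⟨x, y⟩ * z) ↔
    (x * z.re - y * z.im) % 3 = 1 ∧ 0 < x * z.re - y * z.im ∧
      0 < x * z.im + y * z.re - y * z.im := by
  rw [InSector, QuadraticAlgebra.re_mul, QuadraticAlgebra.im_mul]
  ring_nf

lemma residues_of_norm_mod_nine_eq_three {z : EisensteinInt} (hz : z.norm % 9 = 3) :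
    z.re % 3 = 1 ∧ z.im % 3 = 2 ∨ z.re % 3 = 2 ∧ z.im % 3 = 1 := by
  rw [norm_eq] at hz
  have hsq : (z.re + z.im) ^ 2 % 3 = 0 := by
    rw [show (z.re + z.im) ^ 2 = z.re ^ 2 - z.re * z.im + z.im ^ 2 + 3 * (z.re * z.im) by ring]
    omega
  have hsum : (3 : ℤ) ∣ z.re + z.im :=
    Int.prime_three.dvd_of_dvd_pow (Int.dvd_of_emod_eq_zero hsq)
  have hre : z.re % 3 ≠ 0 := fun h => by
    obtain ⟨x, hx⟩ : (3 : ℤ) ∣ z.re := Int.dvd_of_emod_eq_zero h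
    obtain ⟨y, hy⟩ : (3 : ℤ) ∣ z.im := (dvd_add_right ⟨x, hx⟩).1 hsum
    rw [hx, hy, show (3 * x) ^ 2 - 3 * x * (3 * y) + (3 * y) ^ 2 =
      9 * (x ^ 2 - x * y + y ^ 2) by ring, Int.mul_emod_right] at hz
    omega
  omega

lemma exists_norm_eq_one_and_inSector_mul {z : EisensteinInt} (hz : z.norm % 9 = 3) :
    ∃ u : EisensteinInt, u.norm = 1 ∧ InSector (u * z) := by
  rcases residues_of_norm_mod_nine_eq_three hz with hres | hres
  · obtain h | h | h : 0 < z.re ∧ 0 < z.im ∨ z.im < 0 ∧ z.im < z.re ∨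
      z.re < 0 ∧ z.re < z.im := by omega
    · exact ⟨⟨1, 0⟩, rfl, inSector_mk_mul_iff.2 (by omega)⟩
    · exact ⟨⟨0, 1⟩, rfl, inSector_mk_mul_iff.2 (by omega)⟩
    · exact ⟨⟨-1, -1⟩, rfl, inSector_mk_mul_iff.2 (by omega)⟩
  · obtain h | h | h : z.re < 0 ∧ z.im < 0 ∨ 0 < z.im ∧ z.re < z.im ∨
      0 < z.re ∧ z.im < z.re := by omega
    · exact ⟨⟨-1, 0⟩, rfl, inSector_mk_mul_iff.2 (by omega)⟩
    · exact ⟨⟨0, -1⟩, rfl, inSector_mk_mul_iff.2 (by omega)⟩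
    · exact ⟨⟨1, 1⟩, rfl, inSector_mk_mul_iff.2 (by omega)⟩

lemma eq_one_of_inSector_mul {u z : EisensteinInt} (hu : u.norm = 1) (hz : z.norm % 9 = 3)
    (hsector : InSector z) (hmul : InSector (u * z)) : u = 1 := by
  have hres := residues_of_norm_mod_nine_eq_three hz
  have hmem : u ∈ {u : EisensteinInt | u.norm = 1} := hu
  rw [setOf_norm_eq_one] at hmem
  simp only [coe_insert, coe_singleton, Set.mem_insert_iff, Set.mem_singleton_iff] at hmem
  rcases hmem with rfl | rfl | rfl | rfl | rfl | rfl
  · rfl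
  all_goals
    rw [inSector_mk_mul_iff] at hmul
    obtain ⟨hre3, hre, him⟩ := hsector
    omega

lemma star_mul_self_of_norm_eq_one {u : EisensteinInt} (hu : u.norm = 1) : star u * u = 1 := by
  rw [mul_comm, mul_star_self, hu, Int.cast_one]

lemma normCount_eq_six_mul_ncard_inSector {n : ℤ} (hn : n % 9 = 3) :
    normCount n = 6 * {z : EisensteinInt | z.norm = n ∧ InSector z}.ncard := by
  have himage : {z : EisensteinInt | z.norm = n} = (fun q => q.1 * q.2) ''
      ({u : EisensteinInt | u.norm = 1} ×ˢ {z : EisensteinInt | z.norm = n ∧ InSector z}) := by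
    ext z
    constructor
    · intro hz
      obtain ⟨u, hu, hsector⟩ := exists_norm_eq_one_and_inSector_mul (z := z) (by rwa [hz])
      refine ⟨(star u, u * z), ⟨(QuadraticAlgebra.norm_star u).trans hu, ?_, hsector⟩, ?_⟩
      · rw [map_mul, hu, one_mul, hz]
      · exact (mul_assoc _ _ _).symm.trans (by rw [star_mul_self_of_norm_eq_one hu, one_mul])
    · rintro ⟨⟨u, w⟩, ⟨hu, hw, -⟩, rfl⟩
      exact (map_mul _ u w).trans (by rw [hu, hw, one_mul])
  rw [← normCount_one, normCount, normCount, ← Set.ncard_prod, himage, Set.InjOn.ncard_image]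
  rintro ⟨u, z⟩ ⟨hu, hz, hsector⟩ ⟨v, w⟩ ⟨hv, -, hsector'⟩ (hmul : u * z = v * w)
  have hw : star v * u * z = w := by
    rw [mul_assoc, hmul, ← mul_assoc, star_mul_self_of_norm_eq_one hv, one_mul]
  have hone : star v * u = 1 := by
    refine eq_one_of_inSector_mul ?_ (hz ▸ hn) hsector (hw ▸ hsector')
    rw [map_mul, QuadraticAlgebra.norm_star, hv, hu, one_mul]
  have huv : u = v := by
    rw [← one_mul u, ← star_mul_self_of_norm_eq_one hv, mul_comm (star v), mul_assoc, hone, mul_one]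
  rw [hone, one_mul] at hw
  rw [huv, hw]

end EisensteinInt

open EisensteinInt in
theorem ncard_core_pairs (n : ℕ) :
    ({q : ℕ × ℕ | q.1 ^ 2 + q.2 ^ 2 + q.2 = n + q.1 * q.2}.ncard : ℤ) = chiZeta (3 * n + 1) := by
  let toSector (q : ℕ × ℕ) : EisensteinInt := ⟨3 * q.1 + 1, 3 * q.2 + 2⟩
  have hinj : Function.Injective toSector := fun q r h => by
    simp only [toSector, QuadraticAlgebra.mk.injEq] at h
    exact Prod.ext (by omega) (by omega)
  have hnorm (q : ℕ × ℕ) : (toSector q).norm = ((9 * n + 3 : ℕ) : ℤ) ↔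
      q.1 ^ 2 + q.2 ^ 2 + q.2 = n + q.1 * q.2 := by
    rw [norm_eq]
    zify
    simp only [toSector]
    constructor <;> intro h <;> linarith
  have himage : toSector '' {q : ℕ × ℕ | q.1 ^ 2 + q.2 ^ 2 + q.2 = n + q.1 * q.2} =
      {z | z.norm = ((9 * n + 3 : ℕ) : ℤ) ∧ InSector z} := by
    ext z
    constructor
    · rintro ⟨q, hq, rfl⟩
      exact ⟨(hnorm q).2 hq, by simp only [InSector, toSector]; omega⟩
    · rintro ⟨hz, hsector⟩
      have hres := residues_of_norm_mod_nine_eq_three (z := z) (by omega)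
      obtain ⟨hre3, hre, him⟩ := hsector
      obtain ⟨q, rfl⟩ : ∃ q, toSector q = z :=
        ⟨((z.re / 3).toNat, (z.im / 3).toNat), by ext <;> simp only [toSector] <;> omega⟩
      exact ⟨q, (hnorm q).1 hz, rfl⟩
  have hcount := normCount_eq_six_mul_ncard_inSector (n := ((9 * n + 3 : ℕ) : ℤ)) (by omega)
  rw [← himage, Set.ncard_image_of_injective _ hinj] at hcount
  have hchi : chiZeta (9 * n + 3) = chiZeta (3 * n + 1) := by
    rw [show 9 * n + 3 = 3 * (3 * n + 1) by ring, chiZeta_three_mul_of_coprime (by simp)]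
  have := normCount_eq (n := 9 * n + 3) (by omega)
  omega

/-! ### First-column hook lengths -/

section BetaSet

variable {μ : YoungDiagram}

/-- The first-column hook lengths of a Young diagram. They determine the diagram and, unlike the
row lengths, are pairwise distinct. -/
def betaSet (μ : YoungDiagram) : Finset ℕ :=
  (range (μ.colLen 0)).image fun i => μ.hookLength i 0

/-- The `j`-th element, in increasing order, of the complement of `betaSet μ`. -/
def betaGap (μ : YoungDiagram) (j : ℕ) : ℕ :=
  μ.colLen 0 + j - μ.colLen j

lemma lt_rowLen_iff_lt_colLen {i j : ℕ} : j < μ.rowLen i ↔ i < μ.colLen j :=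
  YoungDiagram.mem_iff_lt_rowLen.symm.trans YoungDiagram.mem_iff_lt_colLen

lemma betaGap_lt_hookLength_zero_iff {i j : ℕ} (hi : i < μ.colLen 0) :
    betaGap μ j < μ.hookLength i 0 ↔ (i, j) ∈ μ := by
  have hcell : j < μ.rowLen i ↔ i < μ.colLen j := lt_rowLen_iff_lt_colLen
  have hcol := μ.colLen_anti 0 j j.zero_le
  rw [YoungDiagram.mem_iff_lt_rowLen, betaGap, YoungDiagram.hookLength]
  omega

lemma betaGap_notMem_betaSet (j : ℕ) : betaGap μ j ∉ betaSet μ := by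
  simp only [betaSet, mem_image, mem_range, not_exists, not_and]
  intro i hi
  have hcell : j < μ.rowLen i ↔ i < μ.colLen j := lt_rowLen_iff_lt_colLen
  have hcol := μ.colLen_anti 0 j j.zero_le
  rw [betaGap, YoungDiagram.hookLength]
  omega

lemma betaGap_add_hookLength {i j : ℕ} (h : (i, j) ∈ μ) :
    betaGap μ j + μ.hookLength i j = μ.hookLength i 0 := by
  have hrow := YoungDiagram.mem_iff_lt_rowLen.1 h
  have hcol := YoungDiagram.mem_iff_lt_colLen.1 h
  have hcol_anti := μ.colLen_anti 0 j j.zero_le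
  simp only [betaGap, YoungDiagram.hookLength]
  omega

lemma exists_betaGap_eq_of_notMem {y : ℕ} (hy : y ∉ betaSet μ) : ∃ j, betaGap μ j = y := by
  simp only [betaSet, mem_image, mem_range, not_exists, not_and, YoungDiagram.hookLength] at hy
  -- `k` counts the rows whose first-column hook length exceeds `y`; the gap sits in a column of
  -- height `k`.
  have hex : ∃ k, ¬(k < μ.colLen 0 ∧ y < μ.hookLength k 0) := ⟨μ.colLen 0, by simp⟩
  obtain ⟨k, hk, hmin⟩ : ∃ k, ¬(k < μ.colLen 0 ∧ y < μ.hookLength k 0) ∧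
      ∀ i < k, i < μ.colLen 0 ∧ y < μ.hookLength i 0 :=
    ⟨Nat.find hex, Nat.find_spec hex, fun i hi => not_not.1 (Nat.find_min hex hi)⟩
  have hk_not := hy k
  have hk_pos : 0 < μ.rowLen k ↔ k < μ.colLen 0 := lt_rowLen_iff_lt_colLen
  have hle : k ≤ μ.colLen 0 := by
    by_contra! h
    exact lt_irrefl _ (hmin _ h).1
  simp only [YoungDiagram.hookLength] at hk hmin
  refine ⟨y + k - μ.colLen 0, ?_⟩
  have hcol : μ.colLen (y + k - μ.colLen 0) = k := by
    have hnot_lt : ¬k < μ.colLen (y + k - μ.colLen 0) := by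
      rw [← lt_rowLen_iff_lt_colLen]
      omega
    have hpred_lt (i : ℕ) (hi : i + 1 = k) : i < μ.colLen (y + k - μ.colLen 0) := by
      have := hmin i (by omega)
      rw [← lt_rowLen_iff_lt_colLen]
      omega
    have := hpred_lt (k - 1)
    omega
  rw [betaGap, hcol]
  omega

theorem forall_not_dvd_hookLength_iff {t : ℕ} (ht : 0 < t) :
    (∀ c ∈ μ.cells, ¬t ∣ μ.hookLength c.1 c.2) ↔
      ∀ x ∈ betaSet μ, t ≤ x → x - t ∈ betaSet μ := by
  constructor
  · intro hcore x hx hle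
    by_contra hgap
    obtain ⟨j, hj⟩ := exists_betaGap_eq_of_notMem hgap
    obtain ⟨i, hi, rfl⟩ := mem_image.1 hx
    have hcell : (i, j) ∈ μ := (betaGap_lt_hookLength_zero_iff (mem_range.1 hi)).1 (by omega)
    have hhook : μ.hookLength i j = t := by
      have := betaGap_add_hookLength hcell
      omega
    exact hcore (i, j) hcell (dvd_of_eq hhook.symm)
  · rintro hclosed ⟨i, j⟩ hcell ⟨q, hq⟩
    have hsub (q : ℕ) : ∀ x ∈ betaSet μ, t * q ≤ x → x - t * q ∈ betaSet μ := by
      induction q with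
      | zero => simp
      | succ q ih =>
        intro x hx hle
        rw [mul_add_one, ← Nat.sub_sub] at *
        exact hclosed _ (ih x hx (by omega)) (by omega)
    have hadd := betaGap_add_hookLength hcell
    have hi : i < μ.colLen 0 := (YoungDiagram.mem_iff_lt_colLen.1 hcell).trans_le
      (μ.colLen_anti 0 j j.zero_le)
    refine betaGap_notMem_betaSet (μ := μ) j ?_
    convert hsub q _ (mem_image_of_mem _ (mem_range.2 hi)) (by simp only at hq; omega) using 1
    simp only at hq
    omega

end BetaSet

lemma hookLength_zero_strictAntiOn (μ : YoungDiagram) :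
    StrictAntiOn (fun i => μ.hookLength i 0) (range (μ.colLen 0) : Set ℕ) := by
  intro i hi k hk hik
  rw [coe_range, Set.mem_Iio] at hi hk
  have hrow := μ.rowLen_anti i k hik.le
  simp only [YoungDiagram.hookLength]
  omega

lemma card_betaSet (μ : YoungDiagram) : (betaSet μ).card = μ.colLen 0 := by
  rw [betaSet, card_image_of_injOn (hookLength_zero_strictAntiOn μ).injOn, card_range]

lemma zero_notMem_betaSet (μ : YoungDiagram) : 0 ∉ betaSet μ := by
  simpa [betaGap] using betaGap_notMem_betaSet (μ := μ) 0

lemma card_eq_sum_rowLen (μ : YoungDiagram) :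
    μ.card = ∑ i ∈ range (μ.colLen 0), μ.rowLen i := by
  have hmaps : ∀ c ∈ μ.cells, c.1 ∈ range (μ.colLen 0) := fun c hc => mem_range.2 <|
    (YoungDiagram.mem_iff_lt_colLen.1 hc).trans_le (μ.colLen_anti 0 c.2 (Nat.zero_le _))
  rw [YoungDiagram.card, card_eq_sum_card_fiberwise hmaps]
  exact sum_congr rfl fun i _ => μ.rowLen_eq_card.symm

lemma sum_betaSet (μ : YoungDiagram) :
    ∑ x ∈ betaSet μ, x = μ.card + ∑ i ∈ range (μ.colLen 0), i := by
  rw [betaSet, sum_image (hookLength_zero_strictAntiOn μ).injOn, card_eq_sum_rowLen,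
    ← sum_range_reflect (fun i => i), ← sum_add_distrib]
  refine sum_congr rfl fun i hi => ?_
  have hi := mem_range.1 hi
  have hrow : 0 < μ.rowLen i := lt_rowLen_iff_lt_colLen.2 hi
  rw [YoungDiagram.hookLength]
  omega

theorem betaSet_injective : Function.Injective betaSet := by
  intro μ ν h
  have hcol : ν.colLen 0 = μ.colLen 0 := by rw [← card_betaSet, ← card_betaSet, h]
  let hook (lam : YoungDiagram) (i : Fin (μ.colLen 0)) : ℕᵒᵈ :=
    OrderDual.toDual (lam.hookLength i 0)
  have hmono (lam : YoungDiagram) (hlam : lam.colLen 0 = μ.colLen 0) : StrictMono (hook lam) :=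
    fun i k hik => hookLength_zero_strictAntiOn lam (by simp [hlam]) (by simp [hlam]) hik
  have hrange (lam : YoungDiagram) (hlam : lam.colLen 0 = μ.colLen 0) :
      Set.range (hook lam) = OrderDual.ofDual ⁻¹' (betaSet lam : Set ℕ) := by
    ext x
    simp only [betaSet, hook, hlam, Set.mem_range, Set.mem_preimage, mem_coe, mem_image, mem_range,
      Fin.exists_iff, exists_prop]
    rfl
  have hhook : hook μ = hook ν := by
    rw [← (hmono μ rfl).range_inj (hmono ν hcol), hrange μ rfl, hrange ν hcol, h]
  have hrow (i : ℕ) : μ.rowLen i = ν.rowLen i := by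
    have hμ : 0 < μ.rowLen i ↔ i < μ.colLen 0 := lt_rowLen_iff_lt_colLen
    have hν : 0 < ν.rowLen i ↔ i < ν.colLen 0 := lt_rowLen_iff_lt_colLen
    by_cases hi : i < μ.colLen 0
    · have : μ.hookLength i 0 = ν.hookLength i 0 := congrFun hhook ⟨i, hi⟩
      simp only [YoungDiagram.hookLength] at this
      omega
    · omega
  ext ⟨i, j⟩
  rw [YoungDiagram.mem_cells, YoungDiagram.mem_cells, YoungDiagram.mem_iff_lt_rowLen,
    YoungDiagram.mem_iff_lt_rowLen, hrow]

lemma exists_rowLen_eq {r : ℕ} {rows : Fin r → ℕ} (hanti : Antitone rows)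
    (hpos : ∀ i, 0 < rows i) :
    ∃ μ : YoungDiagram, μ.colLen 0 = r ∧ ∀ i : Fin r, μ.rowLen i = rows i := by
  have hsorted : (List.ofFn rows).SortedGE := hanti.sortedGE_ofFn
  refine ⟨.ofRowLens _ hsorted, ?_, fun i => ?_⟩
  · rw [← YoungDiagram.length_rowLens, YoungDiagram.rowLens_length_ofRowLens (by simpa using hpos),
      List.length_ofFn]
  · simpa using YoungDiagram.rowLen_ofRowLens (hw := hsorted) (i.cast List.length_ofFn.symm)

lemma add_le_add_of_strictMono {r : ℕ} {f : Fin r → ℕ} (hf : StrictMono f) {i k : Fin r}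
    (hik : i ≤ k) : f i + k ≤ f k + i := by
  have hcard : (Icc i k).card ≤ (Icc (f i) (f k)).card :=
    card_le_card_of_injOn f
      (fun x hx => by simpa [hf.le_iff_le] using hx) hf.injective.injOn
  rw [Fin.card_Icc, Nat.card_Icc] at hcard
  have : (i : ℕ) ≤ k := hik
  have := hf.monotone hik
  omega

theorem exists_betaSet_eq {S : Finset ℕ} (hS : 0 ∉ S) : ∃ μ, betaSet μ = S := by
  let e := S.orderEmbOfFin rfl
  have hgt (i : Fin S.card) : (i : ℕ) < e i := by
    let first : Fin S.card := ⟨0, i.pos⟩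
    have hfirst : e first ≠ 0 := fun h => hS (h ▸ S.orderEmbOfFin_mem rfl first)
    have := add_le_add_of_strictMono e.strictMono (show first ≤ i from Nat.zero_le _)
    simp only [first] at *
    omega
  have hanti : Antitone fun i : Fin S.card => e i.rev - i.rev := fun i k hik => by
    have := add_le_add_of_strictMono e.strictMono (Fin.rev_le_rev.2 hik)
    have := hgt i.rev
    simp only
    omega
  obtain ⟨μ, hcol, hrow⟩ := exists_rowLen_eq hanti fun i => Nat.sub_pos_of_lt (hgt i.rev)
  have hhook (i : Fin S.card) : μ.hookLength i 0 = e i.rev := by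
    have := hgt i.rev
    rw [YoungDiagram.hookLength, hrow, hcol]
    simp only [Fin.val_rev] at *
    omega
  refine ⟨μ, eq_of_subset_of_card_le (fun x hx => ?_) (by rw [card_betaSet, hcol])⟩
  obtain ⟨i, hi, rfl⟩ := mem_image.1 hx
  rw [hcol, mem_range] at hi
  exact hhook ⟨i, hi⟩ ▸ S.orderEmbOfFin_mem rfl _

/-- The first-column hook lengths of the 3-core attached to `q = (a, b)`: the `a` smallest numbers
congruent to `1` modulo `3` and the `b` smallest congruent to `2`. -/
def coreSet (q : ℕ × ℕ) : Finset ℕ :=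
  (range q.1).image (fun i => 3 * i + 1) ∪ (range q.2).image (fun i => 3 * i + 2)

lemma mem_coreSet {q : ℕ × ℕ} {x : ℕ} :
    x ∈ coreSet q ↔ x % 3 = 1 ∧ x < 3 * q.1 ∨ x % 3 = 2 ∧ x < 3 * q.2 := by
  simp only [coreSet, mem_union, mem_image, mem_range]
  refine or_congr ⟨?_, fun h => ⟨x / 3, by omega⟩⟩ ⟨?_, fun h => ⟨x / 3, by omega⟩⟩ <;>
    (rintro ⟨i, hi, rfl⟩; omega)

lemma coreSet_injective : Function.Injective coreSet := by
  rintro ⟨a, b⟩ ⟨c, d⟩ h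
  have hmem (x : ℕ) := Finset.ext_iff.1 h x
  simp only [mem_coreSet] at hmem
  have := hmem (3 * a + 1)
  have := hmem (3 * c + 1)
  have := hmem (3 * b + 2)
  have := hmem (3 * d + 2)
  ext <;> simp only <;> omega

lemma sum_coreSet (f : ℕ → ℕ) (q : ℕ × ℕ) :
    ∑ x ∈ coreSet q, f x =
      ∑ i ∈ range q.1, f (3 * i + 1) + ∑ i ∈ range q.2, f (3 * i + 2) := by
  rw [coreSet, sum_union, sum_image (by intro i _ j _ h; simpa using h),
    sum_image (by intro i _ j _ h; simpa using h)]
  rw [disjoint_left]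
  simp only [mem_image, mem_range]
  rintro _ ⟨i, -, rfl⟩ ⟨j, -, h⟩
  omega

lemma card_coreSet (q : ℕ × ℕ) : (coreSet q).card = q.1 + q.2 := by
  simpa using sum_coreSet (fun _ => 1) q

lemma two_mul_sum_range_mul_add (d c a : ℕ) :
    2 * ∑ i ∈ range a, (d * i + c) + d * a = d * a ^ 2 + 2 * c * a := by
  induction a with
  | zero => simp
  | succ a ih =>
    rw [sum_range_succ]
    linarith

lemma sum_coreSet_id (q : ℕ × ℕ) :
    ∑ x ∈ coreSet q, x + q.1 * q.2 =
      q.1 ^ 2 + q.2 ^ 2 + q.2 + ∑ i ∈ range (q.1 + q.2), i := by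
  have hone := two_mul_sum_range_mul_add 3 1 q.1
  have htwo := two_mul_sum_range_mul_add 3 2 q.2
  have hrange := two_mul_sum_range_mul_add 1 0 (q.1 + q.2)
  simp only [one_mul, add_zero] at hrange
  rw [sum_coreSet]
  linarith

lemma exists_eq_range {T : Finset ℕ} (hT : ∀ i, i + 1 ∈ T → i ∈ T) : ∃ a, T = range a := by
  have hex : ∃ a, a ∉ T := Infinite.exists_notMem_finset T
  refine ⟨Nat.find hex, Finset.ext fun x => ?_⟩
  rw [mem_range]
  refine ⟨fun hx => ?_, fun hx => not_not.1 (Nat.find_min hex hx)⟩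
  by_contra! hle
  exact Nat.find_spec hex (Nat.decreasingInduction (fun i _ => hT i) hx hle)

lemma exists_coreSet_eq_iff {S : Finset ℕ} :
    (∃ q, coreSet q = S) ↔ 0 ∉ S ∧ ∀ x ∈ S, 3 ≤ x → x - 3 ∈ S := by
  constructor
  · rintro ⟨q, rfl⟩
    refine ⟨by simp [mem_coreSet], fun x hx hle => ?_⟩
    rw [mem_coreSet] at hx ⊢
    omega
  · rintro ⟨hzero, hclosed⟩
    have hrunner (c : ℕ) : ∃ a, ∀ i, 3 * i + c ∈ S ↔ i < a := by
      have hinj : Set.InjOn (fun i => 3 * i + c) ((fun i => 3 * i + c) ⁻¹' S) :=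
        fun i _ j _ h => by simpa using h
      obtain ⟨a, ha⟩ := exists_eq_range (T := S.preimage _ hinj) fun i hi => by
        rw [mem_preimage] at hi ⊢
        convert hclosed _ hi (by omega) using 1
        omega
      exact ⟨a, fun i => by rw [← mem_range, ← ha, mem_preimage]⟩
    obtain ⟨z, hz⟩ := hrunner 0
    obtain ⟨a, ha⟩ := hrunner 1
    obtain ⟨b, hb⟩ := hrunner 2
    have hz0 : z = 0 := by simpa [hzero] using hz 0
    refine ⟨(a, b), Finset.ext fun x => ?_⟩
    rw [mem_coreSet, ← Nat.div_add_mod x 3]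
    have hmod : x % 3 < 3 := x.mod_lt three_pos
    interval_cases hx : x % 3 <;> simp only [hz, ha, hb] <;> omega

lemma card_eq_iff_of_betaSet_eq {μ : YoungDiagram} {q : ℕ × ℕ} (h : betaSet μ = coreSet q)
    (n : ℕ) :
    μ.card = n ↔ q.1 ^ 2 + q.2 ^ 2 + q.2 = n + q.1 * q.2 := by
  have hcol : μ.colLen 0 = q.1 + q.2 := by rw [← card_betaSet, h, card_coreSet]
  have hβ := sum_betaSet μ
  have hcore := sum_coreSet_id q
  rw [h, hcol] at hβ
  omega

theorem a3_eq_chiZeta (n : ℕ) : (a3 n : ℤ) = chiZeta (3 * n + 1) := by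
  have himage : betaSet '' {μ | μ.card = n ∧ μ.IsThreeCore} =
      coreSet '' {q | q.1 ^ 2 + q.2 ^ 2 + q.2 = n + q.1 * q.2} := by
    ext S
    constructor
    · rintro ⟨μ, ⟨hcard, hcore⟩, rfl⟩
      obtain ⟨q, hq⟩ := exists_coreSet_eq_iff.2
        ⟨zero_notMem_betaSet μ, (forall_not_dvd_hookLength_iff three_pos).1 hcore⟩
      exact ⟨q, (card_eq_iff_of_betaSet_eq hq.symm n).1 hcard, hq⟩
    · rintro ⟨q, hq, rfl⟩
      obtain ⟨hzero, hclosed⟩ := exists_coreSet_eq_iff.1 ⟨q, rfl⟩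
      obtain ⟨μ, hμ⟩ := exists_betaSet_eq hzero
      exact ⟨μ, ⟨(card_eq_iff_of_betaSet_eq hμ n).2 hq,
        (forall_not_dvd_hookLength_iff three_pos).2 (hμ ▸ hclosed)⟩, hμ⟩
  have hncard := congrArg Set.ncard himage
  rw [Set.ncard_image_of_injective _ betaSet_injective,
    Set.ncard_image_of_injective _ coreSet_injective] at hncard
  rw [← ncard_core_pairs, ← hncard, a3, ← Nat.card_coe_set_eq]
  rfl

/-! ### Counting tuples of cores -/

lemma finite_setOf_card_eq (n : ℕ) : {μ : YoungDiagram | μ.card = n}.Finite := by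
  refine Set.Finite.of_finite_image (f := YoungDiagram.cells) ?_ fun μ _ ν _ h =>
    YoungDiagram.ext h
  refine (range n ×ˢ range n).powerset.finite_toSet.subset ?_
  rintro _ ⟨μ, rfl, rfl⟩
  rw [mem_coe, mem_powerset]
  intro c hc
  have hrow : μ.rowLen c.1 ≤ μ.card := μ.rowLen_eq_card ▸ card_le_card (filter_subset _ _)
  have hcol : μ.colLen c.2 ≤ μ.card := μ.colLen_eq_card ▸ card_le_card (filter_subset _ _)
  exact mem_product.2 ⟨mem_range.2 ((YoungDiagram.mem_iff_lt_colLen.1 hc).trans_le hcol),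
    mem_range.2 ((YoungDiagram.mem_iff_lt_rowLen.1 hc).trans_le hrow)⟩

instance finite_threeCore (n : ℕ) : Finite {μ : YoungDiagram // μ.card = n ∧ μ.IsThreeCore} :=
  ((finite_setOf_card_eq n).subset fun _ h => h.1).to_subtype

section Pairs

variable {α β : Type*} (f : α → ℕ) (g : β → ℕ) (P : α → Prop) (Q : β → Prop)

/-- Pairs of total weight `n` satisfying `P` and `Q`, sorted by the weights of their components. -/
def pairsEquivSigma (n : ℕ) : {p : α × β // f p.1 + g p.2 = n ∧ P p.1 ∧ Q p.2} ≃
    Σ q : antidiagonal n, {x // f x = q.1.1 ∧ P x} × {y // g y = q.1.2 ∧ Q y} where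
  toFun p := ⟨⟨(f p.1.1, g p.1.2), HasAntidiagonal.mem_antidiagonal.2 p.2.1⟩,
    ⟨p.1.1, rfl, p.2.2.1⟩, ⟨p.1.2, rfl, p.2.2.2⟩⟩
  invFun s := ⟨(s.2.1, s.2.2), by
    rw [s.2.1.2.1, s.2.2.2.1]
    exact ⟨HasAntidiagonal.mem_antidiagonal.1 s.1.2, s.2.1.2.2, s.2.2.2.2⟩⟩
  left_inv _ := rfl
  right_inv := by
    rintro ⟨⟨⟨i, j⟩, _⟩, ⟨x, hx, _⟩, ⟨y, hy, _⟩⟩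
    obtain rfl : f x = i := hx
    obtain rfl : g y = j := hy
    rfl

variable [∀ n, Finite {x // f x = n ∧ P x}] [∀ n, Finite {y // g y = n ∧ Q y}]

lemma finite_pairs (n : ℕ) : Finite {p : α × β // f p.1 + g p.2 = n ∧ P p.1 ∧ Q p.2} :=
  .of_equiv _ (pairsEquivSigma f g P Q n).symm

lemma card_pairs_eq_sum_antidiagonal (n : ℕ) :
    Nat.card {p : α × β // f p.1 + g p.2 = n ∧ P p.1 ∧ Q p.2} =
      ∑ q ∈ antidiagonal n, Nat.card {x // f x = q.1 ∧ P x} * Nat.card {y // g y = q.2 ∧ Q y} := by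
  rw [Nat.card_congr (pairsEquivSigma f g P Q n), Nat.card_sigma, ← sum_coe_sort (antidiagonal n)]
  exact sum_congr rfl fun q _ => Nat.card_prod _ _

end Pairs

lemma A3_eq_sum (n : ℕ) : A3 n = ∑ q ∈ antidiagonal n, a3 q.1 * a3 q.2 :=
  card_pairs_eq_sum_antidiagonal _ _ _ _ n

lemma B3_eq_sum (n : ℕ) : B3 n = ∑ q ∈ antidiagonal n, a3 q.1 * A3 q.2 := by
  have (m : ℕ) := finite_pairs YoungDiagram.card YoungDiagram.card
    YoungDiagram.IsThreeCore YoungDiagram.IsThreeCore m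
  simp only [B3, add_assoc]
  exact card_pairs_eq_sum_antidiagonal YoungDiagram.card
    (fun p : YoungDiagram × YoungDiagram => p.1.card + p.2.card) YoungDiagram.IsThreeCore
    (fun p => p.1.IsThreeCore ∧ p.2.IsThreeCore) n

theorem three_mul_A3 (n : ℕ) : 3 * A3 n = σ 1 (3 * n + 2) := by
  zify
  rw [← three_mul_sum_chiZeta_mul_chiZeta, A3_eq_sum]
  push_cast
  simp only [a3_eq_chiZeta]

theorem B3_eq_chiPowTwo (n : ℕ) : (B3 n : ℤ) = chiPowTwo (n + 1) := by
  refine mul_left_cancel₀ (three_ne_zero (α := ℤ)) ?_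
  rw [← sum_sigma_mul_chiZeta, B3_eq_sum, ← Nat.sum_antidiagonal_swap]
  push_cast
  rw [mul_sum]
  refine sum_congr rfl fun q _ => ?_
  rw [← three_mul_A3, ← a3_eq_chiZeta, Prod.fst_swap, Prod.snd_swap]
  push_cast
  ring

/-- For a prime p ≡ 1 (mod 3) with p ∤ n+1:
(p²−1)·B₃(pᵏn + pᵏ − 1) = (p^{2(k+1)}−1)·B₃(n). -/
theorem B3_mult_one_mod_three (p k n : ℕ) (hp : p.Prime) (hp3 : p % 3 = 1)
    (hpn : ¬ p ∣ n + 1) :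
    (p ^ 2 - 1) * B3 (p ^ k * n + p ^ k - 1) = (p ^ (2 * (k + 1)) - 1) * B3 n := by
  have hcoprime : (p ^ k).Coprime (n + 1) := ((hp.coprime_iff_not_dvd).2 hpn).pow_left k
  have hindex : p ^ k * n + p ^ k - 1 + 1 = p ^ k * (n + 1) := by
    rw [Nat.sub_add_cancel (Nat.le_add_left_of_le (Nat.one_le_pow _ _ hp.pos)), mul_add_one]
  zify [Nat.one_le_pow 2 p hp.pos, Nat.one_le_pow (2 * (k + 1)) p hp.pos]
  rw [B3_eq_chiPowTwo, B3_eq_chiPowTwo, hindex,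
    isMultiplicative_chiPowTwo.map_mul_of_coprime hcoprime, ← mul_assoc,
    chiPowTwo_prime_pow hp hp3]
end
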